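/- Suppose each receiver of a discrete memoryless interference channel has side information correlated with its own desired source: Receiver k observes V_k^n, k=1,2. If the pair (H(U1|V1), H(U2|V2)) lies in the interior of the capacity region C of the interference channel, then the sources U1 and U2 can be transmitted reliably to their respective receivers. Conversely, if (H(U1|V1), H(U2|V2)) is not in C, then the sources cannot be transmitted reliably. -/

import Mathlib

open Finset Real Filter
open scoped Classical

namespace Paper

/-- `p` is a probability mass function on the finite type `α`. -/
def IsPMF {α : Type*} [Fintype α] (p : α → ℝ) : Prop :=
  (∀ a, 0 ≤ p a) ∧ ∑ a, p a = 1

/-- `k` is a transition probability (channel) from `α` to the finite type `β`. -/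
def IsKernel {α β : Type*} [Fintype β] (k : α → β → ℝ) : Prop :=
  ∀ a, IsPMF (k a)

variable {Ω : Type*} [Fintype Ω]

/-- Probability that the random variable `X` takes the value `x`, under the weight `p`. -/
noncomputable def pr {α : Type*} (p : Ω → ℝ) (X : Ω → α) (x : α) : ℝ :=
  ∑ ω, if X ω = x then p ω else 0

/-- Shannon entropy (base 2) of the random variable `X` under `p`. -/
noncomputable def ent {α : Type*} [Fintype α] (p : Ω → ℝ) (X : Ω → α) : ℝ :=
  ∑ x, -(pr p X x * Real.logb 2 (pr p X x))

/-- Conditional entropy `H(X|Y) = H(X,Y) - H(Y)`. -/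
noncomputable def condEnt {α β : Type*} [Fintype α] [Fintype β]
    (p : Ω → ℝ) (X : Ω → α) (Y : Ω → β) : ℝ :=
  ent p (fun ω => (X ω, Y ω)) - ent p Y

/-- Mutual information `I(X;Y) = H(X) + H(Y) - H(X,Y)`. -/
noncomputable def mi {α β : Type*} [Fintype α] [Fintype β]
    (p : Ω → ℝ) (X : Ω → α) (Y : Ω → β) : ℝ :=
  ent p X + ent p Y - ent p (fun ω => (X ω, Y ω))

/-- Conditional mutual information `I(X;Y|Z) = H(X,Z) + H(Y,Z) - H(X,Y,Z) - H(Z)`. -/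
noncomputable def cmi {α β γ : Type*} [Fintype α] [Fintype β] [Fintype γ]
    (p : Ω → ℝ) (X : Ω → α) (Y : Ω → β) (Z : Ω → γ) : ℝ :=
  ent p (fun ω => (X ω, Z ω)) + ent p (fun ω => (Y ω, Z ω))
    - ent p (fun ω => (X ω, Y ω, Z ω)) - ent p Z

/-- The Markov chain `A → B → C`: `A` and `C` are conditionally independent given `B`. -/
def MarkovChain {α β γ : Type*} (p : Ω → ℝ) (A : Ω → α) (B : Ω → β) (C : Ω → γ) : Prop :=
  ∀ a b c, pr p (fun ω => (A ω, B ω, C ω)) (a, b, c) * pr p B b =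
    pr p (fun ω => (A ω, B ω)) (a, b) * pr p (fun ω => (B ω, C ω)) (b, c)

/-! ## Statement 0: source-channel separation with side information correlated
with the desired source. -/

section Stmt0

variable {U1 V1 U2 V2 X1 X2 Y1 Y2 : Type}
  [Fintype U1] [Fintype V1] [Fintype U2] [Fintype V2]
  [Fintype X1] [Fintype X2] [Fintype Y1] [Fintype Y2]

/-- Error probability of a length-`n` joint source-channel code, where Receiver `k`
has side information `V_k^n` correlated with its own desired source. -/
noncomputable def PerrOwn (ch : X1 × X2 → Y1 × Y2 → ℝ)
    (q1 : U1 × V1 → ℝ) (q2 : U2 × V2 → ℝ) (n : ℕ)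
    (f1 : (Fin n → U1) → Fin n → X1) (f2 : (Fin n → U2) → Fin n → X2)
    (g1 : (Fin n → Y1) → (Fin n → V1) → Fin n → U1)
    (g2 : (Fin n → Y2) → (Fin n → V2) → Fin n → U2) : ℝ :=
  ∑ u1 : Fin n → U1, ∑ v1 : Fin n → V1, ∑ u2 : Fin n → U2, ∑ v2 : Fin n → V2,
    ∑ y : Fin n → Y1 × Y2,
      (∏ i, q1 (u1 i, v1 i)) * (∏ i, q2 (u2 i, v2 i)) *
      (∏ i, ch (f1 u1 i, f2 u2 i) (y i)) *
      (if g1 (fun i => (y i).1) v1 = u1 ∧ g2 (fun i => (y i).2) v2 = u2 then 0 else 1)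

/-- The sources can be transmitted reliably (side information about the desired source). -/
def ReliableOwn (ch : X1 × X2 → Y1 × Y2 → ℝ)
    (q1 : U1 × V1 → ℝ) (q2 : U2 × V2 → ℝ) : Prop :=
  ∃ (f1 : ∀ n : ℕ, (Fin n → U1) → Fin n → X1)
    (f2 : ∀ n : ℕ, (Fin n → U2) → Fin n → X2)
    (g1 : ∀ n : ℕ, (Fin n → Y1) → (Fin n → V1) → Fin n → U1)
    (g2 : ∀ n : ℕ, (Fin n → Y2) → (Fin n → V2) → Fin n → U2),
    Tendsto (fun n => PerrOwn ch q1 q2 n (f1 n) (f2 n) (g1 n) (g2 n)) atTop (nhds 0)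

/-- Joint law of the `n`-letter inputs and outputs of the memoryless interference channel,
for independent input distributions `μ1, μ2`. -/
noncomputable def jointIC (ch : X1 × X2 → Y1 × Y2 → ℝ) (n : ℕ)
    (μ1 : (Fin n → X1) → ℝ) (μ2 : (Fin n → X2) → ℝ) :
    (Fin n → X1) × (Fin n → X2) × (Fin n → Y1 × Y2) → ℝ :=
  fun w => μ1 w.1 * μ2 w.2.1 * ∏ i, ch (w.1 i, w.2.1 i) (w.2.2 i)

/-- The `n`-letter region `E_n` of normalized mutual information pairs for
independent inputs. -/
def En (ch : X1 × X2 → Y1 × Y2 → ℝ) (n : ℕ) : Set (ℝ × ℝ) :=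
  { r | ∃ (μ1 : (Fin n → X1) → ℝ) (μ2 : (Fin n → X2) → ℝ),
      IsPMF μ1 ∧ IsPMF μ2 ∧
      r = ((1 / (n : ℝ)) * mi (jointIC ch n μ1 μ2) (fun w => w.1) (fun w => fun i => (w.2.2 i).1),
           (1 / (n : ℝ)) * mi (jointIC ch n μ1 μ2) (fun w => w.2.1) (fun w => fun i => (w.2.2 i).2)) }

/-- The capacity region of the interference channel: the closure of the union of the `E_n`. -/
noncomputable def capIC (ch : X1 × X2 → Y1 × Y2 → ℝ) : Set (ℝ × ℝ) :=
  closure (⋃ n : ℕ, En ch (n + 1))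

/-!
Achievability is by random coding. An i.i.d. codebook together with the decoder that picks a source
sequence of large likelihood ratio fails with probability at most `4 v / m ^ 2 + 2 ^ (-m / 2)`,
where `m` and `v` are the mean and the variance of the information density minus the conditional
information of the source. Over a long concatenation of independent blocks both `m` and `v` grow
linearly, and `m` has positive slope as soon as the conditional entropies lie strictly below the
rates of one block, which a point in the interior of the capacity region guarantees.

For the converse, Fano's inequality bounds the conditional entropies, up to vanishing terms, by the
mutual informations that a code achieves. These form a point of the capacity region, and every
smaller nonnegative pair is in the region too: it is convex by time sharing, and freezing the input
of one user yields the corners of the rectangle below the point.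
-/

section FiniteProbability

variable {α β ι : Type*} [Fintype α] [Fintype β] [Fintype ι]

/-- Expectation of `f` under the weight `p` on a finite type. -/
noncomputable def mean (p f : Ω → ℝ) : ℝ :=
  ∑ ω, p ω * f ω

/-- Variance of `f` under the weight `p`. -/
noncomputable def variance (p f : Ω → ℝ) : ℝ :=
  mean p fun ω => (f ω - mean p f) ^ 2

/-- The pair (expectation, variance): both components add up over independent summands. -/
noncomputable def moments (p f : Ω → ℝ) : ℝ × ℝ :=
  (mean p f, variance p f)

/-- Joint law of an input distributed as `M` and the output of the channel `K`. -/
def joint (M : α → ℝ) (K : α → β → ℝ) (w : α × β) : ℝ :=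
  M w.1 * K w.1 w.2

/-- Output law of the channel `K` when its input is distributed as `M`. -/
noncomputable def outLaw (M : α → ℝ) (K : α → β → ℝ) (b : β) : ℝ :=
  mean M fun a => K a b

/-- Law of a pair of independent variables. -/
abbrev prodLaw (p : α → ℝ) (q : β → ℝ) : α × β → ℝ :=
  joint p fun _ => q

/-- Law of a family of independent variables. -/
def piLaw (p : ι → α → ℝ) (a : ι → α) : ℝ :=
  ∏ i, p i (a i)

lemma mean_add (p f g : Ω → ℝ) : mean p (fun ω => f ω + g ω) = mean p f + mean p g := by
  simp only [mean, mul_add, sum_add_distrib]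

lemma mean_sub (p f g : Ω → ℝ) : mean p (fun ω => f ω - g ω) = mean p f - mean p g := by
  simp only [mean, mul_sub, sum_sub_distrib]

lemma mean_neg (p f : Ω → ℝ) : mean p (fun ω => -f ω) = -mean p f := by
  simp only [mean, mul_neg, sum_neg_distrib]

lemma mean_const_mul (p f : Ω → ℝ) (c : ℝ) : mean p (fun ω => c * f ω) = c * mean p f := by
  simp only [mean, mul_sum, mul_left_comm]

lemma mean_mul_const (p f : Ω → ℝ) (c : ℝ) : mean p (fun ω => f ω * c) = mean p f * c := by
  simp only [mean, sum_mul, mul_assoc]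

lemma mean_sum {ι : Type*} (p : Ω → ℝ) (s : Finset ι) (f : ι → Ω → ℝ) :
    mean p (fun ω => ∑ i ∈ s, f i ω) = ∑ i ∈ s, mean p (f i) := by
  simp only [mean, mul_sum]
  exact sum_comm

lemma mean_comm (p : α → ℝ) (q : β → ℝ) (F : α → β → ℝ) :
    mean p (fun a => mean q (F a)) = mean q fun b => mean p fun a => F a b := by
  simp only [mean, mul_sum]
  rw [sum_comm]
  exact sum_congr rfl fun _ _ => sum_congr rfl fun _ _ => by ring

lemma mean_congr {p f g : Ω → ℝ} (h : ∀ ω, p ω ≠ 0 → f ω = g ω) : mean p f = mean p g :=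
  sum_congr rfl fun ω _ => by
    by_cases hω : p ω = 0
    · simp only [hω, zero_mul]
    · rw [h ω hω]

lemma mean_mono {p f g : Ω → ℝ} (hp : ∀ ω, 0 ≤ p ω) (h : ∀ ω, 0 < p ω → f ω ≤ g ω) :
    mean p f ≤ mean p g :=
  sum_le_sum fun ω _ => by
    rcases (hp ω).eq_or_lt with hω | hω
    · simp only [← hω, zero_mul, le_refl]
    · exact mul_le_mul_of_nonneg_left (h ω hω) hω.le

lemma mean_nonneg {p f : Ω → ℝ} (hp : ∀ ω, 0 ≤ p ω) (hf : ∀ ω, 0 ≤ f ω) : 0 ≤ mean p f :=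
  sum_nonneg fun ω _ => mul_nonneg (hp ω) (hf ω)

lemma IsPMF.mean_const {p : Ω → ℝ} (hp : IsPMF p) (c : ℝ) : mean p (fun _ => c) = c := by
  rw [mean, ← sum_mul, hp.2, one_mul]

lemma IsPMF.mean_le {p f : Ω → ℝ} {c : ℝ} (hp : IsPMF p) (h : ∀ ω, f ω ≤ c) : mean p f ≤ c :=
  (mean_mono hp.1 fun ω _ => h ω).trans_eq (hp.mean_const c)

lemma IsPMF.nonempty {p : Ω → ℝ} (hp : IsPMF p) : Nonempty Ω := by
  by_contra h
  rw [not_nonempty_iff] at h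
  simpa using hp.2

lemma IsPMF.exists_mean_le {p : Ω → ℝ} (hp : IsPMF p) (f : Ω → ℝ) : ∃ ω, mean p f ≤ f ω := by
  have := hp.nonempty
  obtain ⟨ω, hω⟩ := Finite.exists_max f
  exact ⟨ω, hp.mean_le hω⟩

lemma IsPMF.exists_le_mean {p : Ω → ℝ} (hp : IsPMF p) (f : Ω → ℝ) : ∃ ω, f ω ≤ mean p f := by
  obtain ⟨ω, hω⟩ := hp.exists_mean_le fun ω => -1 * f ω
  rw [mean_const_mul] at hω
  exact ⟨ω, by linarith⟩

lemma isPMF_single [DecidableEq α] (a : α) : IsPMF (Pi.single a (1 : ℝ)) :=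
  ⟨fun b => by rw [Pi.single_apply]; split_ifs <;> norm_num, Fintype.sum_pi_single' a 1⟩

lemma eq_of_forall_mean_eq {p q : Ω → ℝ} (h : ∀ f, mean p f = mean q f) : p = q := by
  funext ω
  simpa [mean, Pi.single_apply] using h (Pi.single ω 1)

lemma mean_single [DecidableEq α] (a : α) (f : α → ℝ) : mean (Pi.single a 1) f = f a := by
  simp [mean, Pi.single_apply]

lemma mean_pr (p : Ω → ℝ) (X : Ω → α) (f : α → ℝ) :
    mean (pr p X) f = mean p fun ω => f (X ω) := by
  simp only [mean, pr, sum_mul, ite_mul, zero_mul]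
  rw [sum_comm]
  simp only [sum_ite_eq, mem_univ, if_true]

lemma pr_eq_mean {γ : Type*} (p : Ω → ℝ) (X : Ω → γ) (x : γ) :
    pr p X x = mean p fun ω => if X ω = x then 1 else 0 := by
  simp only [pr, mean, mul_ite, mul_one, mul_zero]

lemma mean_joint (M : α → ℝ) (K : α → β → ℝ) (f : α × β → ℝ) :
    mean (joint M K) f = mean M fun a => mean (K a) fun b => f (a, b) := by
  simp only [mean, joint, Fintype.sum_prod_type, mul_sum, mul_assoc]

lemma mean_outLaw (M : α → ℝ) (K : α → β → ℝ) (f : β → ℝ) :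
    mean (outLaw M K) f = mean M fun a => mean (K a) f := by
  simp only [mean, outLaw, sum_mul, mul_sum, mul_assoc]
  exact sum_comm

lemma IsPMF.pr {p : Ω → ℝ} (hp : IsPMF p) (X : Ω → α) : IsPMF (pr p X) := by
  refine ⟨fun x => ?_, ?_⟩
  · rw [pr_eq_mean]
    exact mean_nonneg hp.1 fun ω => by split_ifs <;> norm_num
  · simpa only [mean, mul_one, hp.2] using mean_pr p X fun _ => 1

lemma IsPMF.joint {M : α → ℝ} {K : α → β → ℝ} (hM : IsPMF M) (hK : IsKernel K) :
    IsPMF (joint M K) := by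
  refine ⟨fun w => mul_nonneg (hM.1 _) ((hK _).1 _), ?_⟩
  have h := mean_joint M K fun _ => 1
  simp only [(hK _).mean_const, hM.mean_const] at h
  simpa only [mean, mul_one] using h

lemma IsPMF.outLaw {M : α → ℝ} {K : α → β → ℝ} (hM : IsPMF M) (hK : IsKernel K) :
    IsPMF (outLaw M K) := by
  refine ⟨fun b => mean_nonneg hM.1 fun a => (hK a).1 b, ?_⟩
  have h := mean_outLaw M K fun _ => 1
  simp only [(hK _).mean_const, hM.mean_const] at h
  simpa only [mean, mul_one] using h

variable [DecidableEq ι]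

lemma mean_piLaw_prod_univ (p f : ι → α → ℝ) :
    mean (piLaw p) (fun a => ∏ i, f i (a i)) = ∏ i, mean (p i) (f i) := by
  simp only [mean, piLaw, ← prod_mul_distrib]
  exact (Fintype.prod_sum fun i a => p i a * f i a).symm

lemma isPMF_piLaw {p : ι → α → ℝ} (hp : ∀ i, IsPMF (p i)) : IsPMF (piLaw p) := by
  refine ⟨fun a => prod_nonneg fun i _ => (hp i).1 _, ?_⟩
  have h := mean_piLaw_prod_univ p fun _ _ => 1
  simp only [prod_const_one, (hp _).mean_const] at h
  simpa only [mean, mul_one] using h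

lemma mean_piLaw_prod {p : ι → α → ℝ} (hp : ∀ i, IsPMF (p i)) (s : Finset ι) (f : ι → α → ℝ) :
    mean (piLaw p) (fun a => ∏ i ∈ s, f i (a i)) = ∏ i ∈ s, mean (p i) (f i) := by
  have h := mean_piLaw_prod_univ p fun i x => if i ∈ s then f i x else 1
  have hf (i : ι) : mean (p i) (fun x => if i ∈ s then f i x else 1) =
      if i ∈ s then mean (p i) (f i) else 1 := by
    split_ifs
    exacts [rfl, (hp i).mean_const 1]
  simpa only [hf, Fintype.prod_ite_mem] using h

lemma mean_piLaw_eval {p : ι → α → ℝ} (hp : ∀ i, IsPMF (p i)) (i : ι) (f : α → ℝ) :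
    mean (piLaw p) (fun a => f (a i)) = mean (p i) f := by
  simpa only [prod_singleton] using mean_piLaw_prod hp {i} fun _ => f

lemma mean_piLaw_eval₂ {p : ι → α → ℝ} (hp : ∀ i, IsPMF (p i)) {i j : ι} (hij : i ≠ j)
    (F : α → α → ℝ) :
    mean (piLaw p) (fun a => F (a i) (a j)) = mean (p i) fun x => mean (p j) (F x) := by
  have hprod (f g : α → ℝ) :
      mean (piLaw p) (fun a => f (a i) * g (a j)) = mean (p i) f * mean (p j) g := by
    simpa only [prod_pair hij, if_true, if_neg hij.symm] using
      mean_piLaw_prod hp {i, j} fun k => if k = i then f else g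
  have hF (a : ι → α) : F (a i) (a j) = ∑ x, (if a i = x then 1 else 0) * F x (a j) := by
    simp only [ite_mul, one_mul, zero_mul, sum_ite_eq, mem_univ, if_true]
  have hi (x : α) : mean (p i) (fun y => if y = x then 1 else 0) = p i x := by
    simp only [mean, mul_ite, mul_one, mul_zero, sum_ite_eq', mem_univ, if_true]
  simp only [hF, mean_sum]
  exact sum_congr rfl fun x _ => by rw [hprod (fun y => if y = x then 1 else 0), hi]

lemma variance_nonneg {p : Ω → ℝ} (hp : ∀ ω, 0 ≤ p ω) (f : Ω → ℝ) : 0 ≤ variance p f :=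
  mean_nonneg hp fun _ => sq_nonneg _

lemma moments_congr {p f g : Ω → ℝ} (h : ∀ ω, p ω ≠ 0 → f ω = g ω) :
    moments p f = moments p g := by
  have hm : mean p f = mean p g := mean_congr h
  simp only [moments, variance, hm]
  exact Prod.ext rfl (mean_congr fun ω hω => by rw [h ω hω])

lemma moments_comp {p : Ω → ℝ} {q : α → ℝ} {φ : Ω → α}
    (h : ∀ F, mean q F = mean p fun ω => F (φ ω)) (f : α → ℝ) :
    moments q f = moments p fun ω => f (φ ω) := by
  simp only [moments, variance, h]

lemma IsPMF.moments_const {p : Ω → ℝ} (hp : IsPMF p) (c : ℝ) :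
    moments p (fun _ => c) = (c, 0) := by
  simp only [moments, variance, hp.mean_const, sub_self, ne_eq, OfNat.ofNat_ne_zero,
    not_false_eq_true, zero_pow]

lemma moments_prodLaw_add {p : α → ℝ} {q : β → ℝ} (hp : IsPMF p) (hq : IsPMF q)
    (f : α → ℝ) (g : β → ℝ) :
    moments (prodLaw p q) (fun w => f w.1 + g w.2) = moments p f + moments q g := by
  have hm : mean (prodLaw p q) (fun w => f w.1 + g w.2) = mean p f + mean q g := by
    simp only [mean_joint, mean_add, hp.mean_const, hq.mean_const]
  have hsq (a : α) (b : β) : (f a + g b - (mean p f + mean q g)) ^ 2 =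
      (f a - mean p f) ^ 2 + (2 * (f a - mean p f) * (g b - mean q g) + (g b - mean q g) ^ 2) := by
    ring
  refine Prod.ext hm ?_
  simp only [moments, variance, Prod.snd_add, hm, mean_joint, hsq, mean_add, mean_const_mul,
    mean_sub, hq.mean_const, hp.mean_const, sub_self, mul_zero, zero_add]

lemma mean_piLaw_succ {n : ℕ} (p : Fin (n + 1) → α → ℝ) (F : (Fin (n + 1) → α) → ℝ) :
    mean (piLaw p) F =
      mean (prodLaw (p 0) (piLaw fun i => p i.succ)) fun w => F (Fin.consEquiv (fun _ => α) w) := by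
  rw [mean, ← (Fin.consEquiv fun _ => α).sum_comp]
  refine sum_congr rfl fun w _ => ?_
  simp only [piLaw, joint, Fin.consEquiv, Equiv.coe_fn_mk, Fin.prod_univ_succ, Fin.cons_zero,
    Fin.cons_succ]

lemma moments_piLaw_sum {n : ℕ} {q : α → ℝ} (hq : IsPMF q) (f : α → ℝ) :
    moments (piLaw fun _ : Fin n => q) (fun a => ∑ i, f (a i)) = n • moments q f := by
  induction n with
  | zero =>
    have hp : IsPMF (piLaw fun _ : Fin 0 => q) := isPMF_piLaw fun _ => hq
    simpa only [univ_eq_empty, sum_empty, zero_smul, Prod.mk_zero_zero] using hp.moments_const 0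
  | succ n ih =>
    have hp : IsPMF (piLaw fun _ : Fin n => q) := isPMF_piLaw fun _ => hq
    rw [succ_nsmul', ← ih, ← moments_prodLaw_add hq hp f fun a => ∑ i, f (a i),
      moments_comp (mean_piLaw_succ fun _ => q)]
    simp only [Fin.consEquiv, Equiv.coe_fn_mk, Fin.sum_univ_succ, Fin.cons_zero, Fin.cons_succ]

lemma mean_lowerTail_le {p f : Ω → ℝ} (hp : ∀ ω, 0 ≤ p ω) {t : ℝ} (ht : 0 < t) :
    mean p (fun ω => if f ω ≤ mean p f - t then 1 else 0) ≤ variance p f / t ^ 2 := by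
  rw [div_eq_mul_inv, variance, ← mean_mul_const]
  refine mean_mono hp fun ω _ => ?_
  split_ifs with h
  · rw [← div_eq_mul_inv, one_le_div (by positivity), ← neg_sq (f ω - mean p f)]
    exact pow_le_pow_left₀ ht.le (by linarith) 2
  · positivity

end FiniteProbability

section Information

variable {α β γ δ : Type*} [Fintype α] [Fintype β] [Fintype γ] [Fintype δ]

/-- Information density `log (K(b|a) / P(b))` of the channel `K`, where `P` is its output law. -/
noncomputable def infoDensity (M : α → ℝ) (K : α → β → ℝ) (w : α × β) : ℝ :=
  logb 2 (K w.1 w.2) - logb 2 (outLaw M K w.2)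

/-- Expectation and variance of the information density. -/
noncomputable def infoMoments (M : α → ℝ) (K : α → β → ℝ) : ℝ × ℝ :=
  moments (joint M K) (infoDensity M K)

/-- Mutual information between the input of `K`, distributed as `M`, and its output. -/
noncomputable def mutualInfo (M : α → ℝ) (K : α → β → ℝ) : ℝ :=
  mean (joint M K) (infoDensity M K)

/-- Conditional log-likelihood `log Q(a|b)`; its expectation is minus the conditional entropy. -/
noncomputable def condLogLik (Q : α × β → ℝ) (w : α × β) : ℝ :=
  logb 2 (Q w) - logb 2 (pr Q Prod.snd w.2)

/-- Expectation and variance of the conditional log-likelihood. -/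
noncomputable def condMoments (Q : α × β → ℝ) : ℝ × ℝ :=
  moments Q (condLogLik Q)

lemma pr_pr {β : Type*} (p : Ω → ℝ) (X : Ω → α) (φ : α → β) :
    pr (pr p X) φ = pr p fun ω => φ (X ω) := by
  funext b
  rw [pr_eq_mean, mean_pr, pr_eq_mean]

lemma pr_id (p : Ω → ℝ) : pr p (fun ω => ω) = p :=
  eq_of_forall_mean_eq fun f => mean_pr p _ f

lemma le_pr {δ : Type*} {p : Ω → ℝ} (hp : ∀ ω, 0 ≤ p ω) (X : Ω → δ) (ω : Ω) :
    p ω ≤ pr p X (X ω) := by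
  have h := single_le_sum (f := fun ω' => if X ω' = X ω then p ω' else 0)
    (fun ω' _ => by split_ifs; exacts [hp ω', le_rfl]) (mem_univ ω)
  rwa [if_pos rfl] at h

lemma pr_joint_fst {M : α → ℝ} {K : α → β → ℝ} (hK : IsKernel K) :
    pr (joint M K) Prod.fst = M :=
  eq_of_forall_mean_eq fun f => by simp only [mean_pr, mean_joint, (hK _).mean_const]

lemma pr_joint_snd (M : α → ℝ) (K : α → β → ℝ) : pr (joint M K) Prod.snd = outLaw M K :=
  eq_of_forall_mean_eq fun f => by simp only [mean_pr, mean_joint, mean_outLaw]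

lemma outLaw_pr {δ : Type*} (M : α → ℝ) (K : α → β → ℝ) (φ : β → δ) :
    outLaw M (fun a => pr (K a) φ) = pr (outLaw M K) φ := by
  funext c
  simp only [outLaw, pr_eq_mean, mean_outLaw]

lemma pr_snd_pos {Q : α × β → ℝ} (hQ : ∀ w, 0 ≤ Q w) {w : α × β} (hw : Q w ≠ 0) :
    0 < pr Q Prod.snd w.2 :=
  ((hQ w).lt_of_ne' hw).trans_le (le_pr hQ Prod.snd w)

lemma outLaw_pos {M : α → ℝ} {K : α → β → ℝ} (hM : IsPMF M) (hK : IsKernel K) {w : α × β}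
    (hw : joint M K w ≠ 0) : 0 < outLaw M K w.2 :=
  pr_joint_snd M K ▸ pr_snd_pos (hM.joint hK).1 hw

lemma ent_eq_mean (p : Ω → ℝ) (X : Ω → α) :
    ent p X = mean (pr p X) fun x => -logb 2 (pr p X x) := by
  simp only [ent, mean, mul_neg]

lemma mean_condLogLik (Q : α × β → ℝ) :
    mean Q (condLogLik Q) = -condEnt Q Prod.fst Prod.snd := by
  have hQ : pr Q (fun w => (w.1, w.2)) = Q := pr_id Q
  rw [condEnt, ent_eq_mean, ent_eq_mean, hQ, mean_pr, neg_sub, mean_neg, mean_neg,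
    sub_neg_eq_add, neg_add_eq_sub, ← mean_sub]
  rfl

lemma condEnt_nonneg {Q : α × β → ℝ} (hQ : IsPMF Q) : 0 ≤ condEnt Q Prod.fst Prod.snd := by
  rw [← neg_nonpos, ← mean_condLogLik, ← hQ.mean_const 0]
  exact mean_mono hQ.1 fun w hw =>
    sub_nonpos.2 (logb_le_logb_of_le one_lt_two hw (le_pr hQ.1 Prod.snd w))

lemma mi_eq_mutualInfo {p : Ω → ℝ} {X : Ω → α} {Y : Ω → β} {M : α → ℝ} {K : α → β → ℝ}
    (hK : IsKernel K) (h : pr p (fun ω => (X ω, Y ω)) = joint M K) :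
    mi p X Y = mutualInfo M K := by
  have hX : pr p X = pr (joint M K) Prod.fst := by rw [← h, pr_pr]
  have hY : pr p Y = pr (joint M K) Prod.snd := by rw [← h, pr_pr]
  simp only [mi, ent_eq_mean, h, hX, hY]
  rw [mean_pr, mean_pr, ← mean_add, ← mean_sub, pr_joint_fst hK, pr_joint_snd]
  refine mean_congr fun w hw => ?_
  rw [infoDensity, joint, logb_mul (left_ne_zero_of_mul hw) (right_ne_zero_of_mul hw)]
  ring

lemma mutualInfo_pr (M : α → ℝ) (K : α → β → ℝ) (φ : β → γ) :
    mutualInfo M (fun a => pr (K a) φ) =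
      mean (joint M K) fun w => infoDensity M (fun a => pr (K a) φ) (w.1, φ w.2) := by
  rw [mutualInfo, mean_joint, mean_joint]
  exact mean_congr fun a _ => mean_pr _ _ _

lemma infoMoments_pr (p : Ω → ℝ) (X : Ω → α) (K : α → β → ℝ) :
    infoMoments (pr p X) K = infoMoments p fun ω => K (X ω) := by
  have h (F : α × β → ℝ) : mean (joint (pr p X) K) F =
      mean (joint p fun ω => K (X ω)) fun w => F (X w.1, w.2) := by
    simp only [mean_joint, mean_pr]
  rw [infoMoments, moments_comp h, infoMoments]
  unfold infoDensity outLaw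
  simp only [mean_pr]

lemma infoMoments_comp_equiv (M : α → ℝ) (K : α → β → ℝ) (e : γ ≃ β) :
    infoMoments M (fun a c => K a (e c)) = infoMoments M K := by
  have h (F : α × β → ℝ) : mean (joint M K) F =
      mean (joint M fun a c => K a (e c)) fun w => F (w.1, e w.2) := by
    simp only [mean_joint]
    exact mean_congr fun a _ => (e.sum_comp fun b => K a b * F (a, b)).symm
  rw [infoMoments, infoMoments, moments_comp h]
  rfl

lemma outLaw_prodLaw {β δ : Type*} (M : α → ℝ) (N : γ → ℝ) (K : α → β → ℝ) (L : γ → δ → ℝ) :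
    outLaw (prodLaw M N) (fun a => prodLaw (K a.1) (L a.2)) =
      prodLaw (outLaw M K) (outLaw N L) := by
  funext w
  simp only [outLaw, mean_joint, joint, mean_const_mul, mean_mul_const]

lemma infoMoments_prodLaw {M : α → ℝ} {N : γ → ℝ} {K : α → β → ℝ} {L : γ → δ → ℝ}
    (hM : IsPMF M) (hN : IsPMF N) (hK : IsKernel K) (hL : IsKernel L) :
    infoMoments (prodLaw M N) (fun a => prodLaw (K a.1) (L a.2)) =
      infoMoments M K + infoMoments N L := by
  have h (F : (α × γ) × (β × δ) → ℝ) :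
      mean (joint (prodLaw M N) fun a => prodLaw (K a.1) (L a.2)) F =
        mean (prodLaw (joint M K) (joint N L)) fun w => F ((w.1.1, w.2.1), (w.1.2, w.2.2)) := by
    simp only [mean_joint]
    exact mean_congr fun a _ => mean_comm _ _ _
  rw [infoMoments, moments_comp h, infoMoments, infoMoments,
    ← moments_prodLaw_add (hM.joint hK) (hN.joint hL)]
  refine moments_congr fun w hw => ?_
  have hMK : joint M K w.1 ≠ 0 := left_ne_zero_of_mul hw
  have hNL : joint N L w.2 ≠ 0 := right_ne_zero_of_mul hw
  simp only [infoDensity, outLaw_prodLaw, joint]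
  rw [logb_mul (right_ne_zero_of_mul hMK) (right_ne_zero_of_mul hNL),
    logb_mul (outLaw_pos hM hK hMK).ne' (outLaw_pos hN hL hNL).ne']
  ring

lemma infoMoments_single [DecidableEq α] {K : α → β → ℝ} (hK : IsKernel K) (a : α) :
    infoMoments (Pi.single a 1) K = 0 := by
  have hp : IsPMF (joint (Pi.single a 1) K) := (isPMF_single a).joint hK
  rw [infoMoments, ← Prod.mk_zero_zero, ← hp.moments_const 0]
  refine moments_congr fun w hw => ?_
  have hwa : w.1 = a := by
    by_contra h
    exact hw (by simp [joint, h])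
  rw [infoDensity, outLaw, mean_single, hwa, sub_self]

end Information

section Iid

variable {α β γ : Type*} [Fintype α] [Fintype β] [Fintype γ] {n : ℕ}

/-- Law of the pair of sequences formed by `n` independent pairs distributed as `q`. -/
def iid (q : α × β → ℝ) (n : ℕ) (w : (Fin n → α) × (Fin n → β)) : ℝ :=
  ∏ i, q (w.1 i, w.2 i)

lemma mean_iid (q : α × β → ℝ) (F : (Fin n → α) × (Fin n → β) → ℝ) :
    mean (iid q n) F =
      mean (piLaw fun _ => q) fun a => F (fun i => (a i).1, fun i => (a i).2) :=
  ((Equiv.arrowProdEquivProdArrow (Fin n) (fun _ => α) fun _ => β).sum_comp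
    fun w => iid q n w * F w).symm

lemma IsPMF.iid {q : α × β → ℝ} (hq : IsPMF q) : IsPMF (iid q n) := by
  refine ⟨fun w => prod_nonneg fun i _ => hq.1 _, ?_⟩
  have h := mean_iid (n := n) q fun _ => 1
  rw [(isPMF_piLaw fun _ => hq).mean_const] at h
  simpa only [mean, mul_one] using h

lemma pr_piLaw {β : Type*} (p : Fin n → α → ℝ) (X : Fin n → α → β) :
    pr (piLaw p) (fun a i => X i (a i)) = piLaw fun i => pr (p i) (X i) := by
  funext b
  have h := mean_piLaw_prod_univ p fun i x => if X i x = b i then 1 else 0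
  simp only [← pr_eq_mean] at h
  rw [piLaw, ← h, pr_eq_mean]
  refine mean_congr fun a _ => ?_
  rw [prod_ite_zero, prod_const_one]
  simp only [funext_iff, mem_univ, true_implies]

lemma pr_iid_snd (q : α × β → ℝ) :
    pr (iid q n) Prod.snd = piLaw fun _ => pr q Prod.snd := by
  rw [← pr_piLaw]
  exact eq_of_forall_mean_eq fun f => by simp only [mean_pr, mean_iid]

lemma condMoments_iid {q : α × β → ℝ} (hq : IsPMF q) :
    condMoments (iid q n) = n • condMoments q := by
  rw [condMoments, condMoments, ← moments_piLaw_sum hq, moments_comp (mean_iid q)]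
  refine moments_congr fun a ha => ?_
  have ha' (i : Fin n) : q (a i) ≠ 0 := (prod_ne_zero_iff.1 ha) i (mem_univ i)
  simp only [condLogLik, pr_iid_snd, piLaw, iid, Prod.mk.eta]
  rw [logb_prod _ _ fun i _ => (pr_snd_pos hq.1 (ha' i)).ne', logb_prod _ _ fun i _ => ha' i,
    sum_sub_distrib]

end Iid

section Gibbs

variable {α β γ : Type*} [Fintype α] [Fintype β] [Fintype γ]

lemma IsPMF.gibbs_inequality {p s : Ω → ℝ} (hp : IsPMF p) (hs : ∀ ω, 0 ≤ s ω) (hsum : ∑ ω, s ω ≤ 1)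
    (hps : ∀ ω, p ω ≠ 0 → s ω ≠ 0) :
    mean p (fun ω => logb 2 (s ω) - logb 2 (p ω)) ≤ 0 := by
  have hlog : mean p (fun ω => log (s ω) - log (p ω)) ≤ mean p (fun ω => s ω / p ω - 1) := by
    refine mean_mono hp.1 fun ω hω => ?_
    rw [← log_div (hps ω hω.ne') hω.ne']
    exact log_le_sub_one_of_pos (div_pos ((hs ω).lt_of_ne' (hps ω hω.ne')) hω)
  have hratio : mean p (fun ω => s ω / p ω) ≤ ∑ ω, s ω := sum_le_sum fun ω _ => by
    by_cases h : p ω = 0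
    · simpa only [h, zero_mul] using hs ω
    · rw [mul_div_cancel₀ _ h]
  rw [mean_sub _ _ fun _ => 1, hp.mean_const] at hlog
  have hlogb : mean p (fun ω => logb 2 (s ω) - logb 2 (p ω)) =
      mean p (fun ω => log (s ω) - log (p ω)) * (log 2)⁻¹ := by
    rw [← mean_mul_const]
    exact mean_congr fun ω _ => by rw [logb, logb]; ring
  rw [hlogb]
  exact mul_nonpos_of_nonpos_of_nonneg (by linarith) (inv_nonneg.2 (log_nonneg one_le_two))

-- Gibbs' inequality for the law `M(a) K(y|a)` against `M(a) P(y) V(φ(y)|a) / P(φ(y))`, where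
-- `V` is the processed channel and `P` denotes both output laws.
lemma mutualInfo_pr_le {M : α → ℝ} {K : α → β → ℝ} (hM : IsPMF M) (hK : IsKernel K) (φ : β → γ) :
    mutualInfo M (fun a => pr (K a) φ) ≤ mutualInfo M K := by
  set V : α → γ → ℝ := fun a => pr (K a) φ
  set P := outLaw M K
  have hP : IsPMF P := hM.outLaw hK
  have hVP : outLaw M V = pr P φ := outLaw_pr M K φ
  have hs (w : α × β) : 0 ≤ V w.1 (φ w.2) / pr P φ (φ w.2) :=
    div_nonneg (((hK w.1).pr φ).1 _) ((hP.pr φ).1 _)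
  have hsum : ∑ w, prodLaw M P w * (V w.1 (φ w.2) / pr P φ (φ w.2)) ≤ 1 := by
    change mean (prodLaw M P) (fun w => V w.1 (φ w.2) / pr P φ (φ w.2)) ≤ 1
    rw [mean_joint, mean_comm]
    refine hP.mean_le fun y => ?_
    simp only [div_eq_mul_inv, mean_mul_const]
    rw [← div_eq_mul_inv, ← hVP]
    exact div_self_le_one _
  have hpos (w : α × β) (hw : joint M K w ≠ 0) :
      0 < P w.2 ∧ 0 < V w.1 (φ w.2) ∧ 0 < pr P φ (φ w.2) := by
    have hPw : 0 < P w.2 := outLaw_pos hM hK hw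
    exact ⟨hPw, (((hK _).1 _).lt_of_ne' (right_ne_zero_of_mul hw)).trans_le (le_pr (hK _).1 φ _),
      hPw.trans_le (le_pr hP.1 φ _)⟩
  have h := (hM.joint hK).gibbs_inequality
    (fun w => mul_nonneg ((hM.joint fun _ => hP).1 w) (hs w)) hsum fun w hw => by
      obtain ⟨h₁, h₂, h₃⟩ := hpos w hw
      exact mul_ne_zero (mul_ne_zero (left_ne_zero_of_mul hw) h₁.ne') (div_pos h₂ h₃).ne'
  have hlog : mean (joint M K) (fun w =>
      logb 2 (prodLaw M P w * (V w.1 (φ w.2) / pr P φ (φ w.2))) - logb 2 (joint M K w)) =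
      mean (joint M K) fun w => infoDensity M V (w.1, φ w.2) - infoDensity M K w := by
    refine mean_congr fun w hw => ?_
    obtain ⟨h₁, h₂, h₃⟩ := hpos w hw
    have hMw := left_ne_zero_of_mul hw
    simp only [joint, infoDensity, hVP]
    rw [logb_mul (mul_ne_zero hMw h₁.ne') (div_pos h₂ h₃).ne', logb_mul hMw h₁.ne',
      logb_div h₂.ne' h₃.ne', logb_mul hMw (right_ne_zero_of_mul hw)]
    ring
  rw [hlog, mean_sub, ← mutualInfo_pr] at h
  exact sub_nonpos.1 h

lemma mutualInfo_nonneg {M : α → ℝ} {K : α → β → ℝ} (hM : IsPMF M) (hK : IsKernel K) :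
    0 ≤ mutualInfo M K := by
  have hV (a : α) : pr (K a) (fun _ => ()) = fun _ => 1 := by
    funext
    simpa only [pr, if_true] using (hK a).2
  have hdens (w : α × Unit) : infoDensity M (fun _ _ => 1) w = 0 := by
    rw [infoDensity, outLaw, hM.mean_const, sub_self]
  have h0 : mutualInfo M (fun a => pr (K a) fun _ => ()) = 0 := by
    simp only [mutualInfo, hV, mean, hdens, mul_zero, sum_const_zero]
  exact h0 ▸ mutualInfo_pr_le hM hK _

lemma mutualInfo_joint {M : α → ℝ} {μ : β → ℝ} {W : α → β → γ → ℝ} (hM : IsPMF M)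
    (hW : ∀ a, IsKernel (W a)) :
    mutualInfo M (fun a => joint μ (W a)) = mean μ fun b => mutualInfo M fun a => W a b := by
  have hout (b : β) (z : γ) :
      outLaw M (fun a => joint μ (W a)) (b, z) = μ b * outLaw M (fun a => W a b) z := by
    simp only [outLaw, joint, mean_const_mul]
  have hdens (a : α) (b : β) (z : γ) (hw : M a ≠ 0 ∧ μ b ≠ 0 ∧ W a b z ≠ 0) :
      infoDensity M (fun a => joint μ (W a)) (a, b, z) = infoDensity M (fun a => W a b) (a, z) := by
    have hpos := outLaw_pos (w := (a, z)) hM (fun a => hW a b) (mul_ne_zero hw.1 hw.2.2)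
    simp only [infoDensity, hout, joint]
    rw [logb_mul hw.2.1 hw.2.2, logb_mul hw.2.1 hpos.ne']
    ring
  simp only [mutualInfo, mean_joint]
  rw [mean_comm μ]
  exact mean_congr fun a ha => mean_congr fun b hb => mean_congr fun z hz =>
    hdens a b z ⟨ha, hb, hz⟩

lemma mutualInfo_outLaw_le {M : α → ℝ} {μ : β → ℝ} {W : α → β → γ → ℝ} (hM : IsPMF M)
    (hμ : IsPMF μ) (hW : ∀ a, IsKernel (W a)) :
    mutualInfo M (fun a => outLaw μ (W a)) ≤ mean μ fun b => mutualInfo M fun a => W a b := by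
  simp only [← mutualInfo_joint hM hW, ← pr_joint_snd]
  exact mutualInfo_pr_le hM (fun a => hμ.joint (hW a)) Prod.snd

-- Gibbs' inequality for the law `Q(a,b) K(z|a)` against `R(b) P(z) r(a|b,z)`, where `R` and `P`
-- are the laws of the side information and of the output.
lemma condEnt_le_mutualInfo_sub {Q : α × β → ℝ} {K : α → γ → ℝ} (hQ : IsPMF Q) (hK : IsKernel K)
    {r : (α × β) × γ → ℝ} (hr : ∀ w, 0 < r w) (hsum : ∀ b z, ∑ a, r ((a, b), z) ≤ 1) :
    condEnt Q Prod.fst Prod.snd ≤ mutualInfo Q (fun w => K w.1) -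
      mean (joint Q fun w => K w.1) fun w => logb 2 (r w) := by
  set R := pr Q Prod.snd
  set P := outLaw Q fun w => K w.1
  have hR : IsPMF R := hQ.pr _
  have hP : IsPMF P := hQ.outLaw fun w => hK w.1
  have hs : ∑ w : (α × β) × γ, prodLaw R P (w.1.2, w.2) * r w ≤ 1 := by
    calc ∑ w : (α × β) × γ, prodLaw R P (w.1.2, w.2) * r w
        = mean (prodLaw R P) fun w => ∑ a, r ((a, w.1), w.2) := by
          simp only [mean, mul_sum, Fintype.sum_prod_type]
          rw [sum_comm]
          exact sum_congr rfl fun _ _ => sum_comm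
      _ ≤ 1 := (hR.joint fun _ => hP).mean_le fun w => hsum w.1 w.2
  have hpos (w : (α × β) × γ) (hw : joint Q (fun w => K w.1) w ≠ 0) : 0 < R w.1.2 ∧ 0 < P w.2 :=
    ⟨pr_snd_pos hQ.1 (left_ne_zero_of_mul hw), outLaw_pos hQ (fun w => hK w.1) hw⟩
  have h := (hQ.joint fun w => hK w.1).gibbs_inequality
    (fun w => mul_nonneg ((hR.joint fun _ => hP).1 _) (hr w).le) hs fun w hw =>
      (mul_pos (mul_pos (hpos w hw).1 (hpos w hw).2) (hr w)).ne'
  have hlog : mean (joint Q fun w => K w.1) (fun w =>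
      logb 2 (prodLaw R P (w.1.2, w.2) * r w) - logb 2 (joint Q (fun w => K w.1) w)) =
      mean (joint Q fun w => K w.1) (fun w =>
        logb 2 (r w) - infoDensity Q (fun w => K w.1) w - condLogLik Q w.1) := by
    refine mean_congr fun w hw => ?_
    obtain ⟨hRw, hPw⟩ := hpos w hw
    simp only [joint]
    rw [logb_mul (mul_pos hRw hPw).ne' (hr w).ne', logb_mul hRw.ne' hPw.ne',
      logb_mul (left_ne_zero_of_mul hw) (right_ne_zero_of_mul hw), condLogLik, infoDensity]
    ring
  rw [hlog, mean_sub, mean_sub] at h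
  have hcond : mean (joint Q fun w => K w.1) (fun w => condLogLik Q w.1) =
      -condEnt Q Prod.fst Prod.snd := by
    rw [← mean_condLogLik, mean_joint]
    exact mean_congr fun w _ => (hK w.1).mean_const (condLogLik Q w)
  rw [mutualInfo]
  linarith

end Gibbs

section Codes

variable {α β γ ξ : Type*} [Fintype α] [Fintype β] [Fintype γ]

/-- Probability that the first coordinate of `Q` is decoded wrongly by `g` from the second
coordinate and the output of the channel `K` used with the encoder `f`. -/
noncomputable def errProb (Q : α × β → ℝ) (K : ξ → γ → ℝ) (f : α → ξ) (g : γ → β → α) : ℝ :=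
  mean Q fun w => mean (K (f w.1)) fun z => if g z w.2 = w.1 then 0 else 1

/-- Law of the codeword that the encoder `f` assigns to the first coordinate of `Q`. -/
noncomputable abbrev codewordLaw (Q : α × β → ℝ) (f : α → ξ) : ξ → ℝ :=
  pr Q fun w => f w.1

lemma errProb_outLaw {η : Type*} [Fintype η] (Q : α × β → ℝ) (μ : η → ℝ) (W : ξ → η → γ → ℝ)
    (f : α → ξ) (g : γ → β → α) :
    errProb Q (fun x => outLaw μ (W x)) f g = mean μ fun b => errProb Q (fun x => W x b) f g := by
  simp only [errProb, mean_outLaw, mean_comm Q]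

lemma errProb_le_one {Q : α × β → ℝ} {K : ξ → γ → ℝ} (hQ : IsPMF Q) (hK : IsKernel K)
    (f : α → ξ) (g : γ → β → α) : errProb Q K f g ≤ 1 :=
  hQ.mean_le fun _ => (hK _).mean_le fun _ => by split_ifs <;> norm_num

-- The weight `r(a|b,z)` of `condEnt_le_mutualInfo_sub` is the average of the point mass at the
-- decoded value and of the uniform law.
lemma fano_inequality {Q : α × β → ℝ} {K : ξ → γ → ℝ} (hQ : IsPMF Q) (hK : IsKernel K) (f : α → ξ)
    (g : γ → β → α) :
    condEnt Q Prod.fst Prod.snd ≤ mutualInfo Q (fun w => K (f w.1)) + 1 +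
      errProb Q K f g * logb 2 (Fintype.card α) := by
  have : Nonempty α := hQ.nonempty.map Prod.fst
  have hcard : (0 : ℝ) < Fintype.card α := Nat.cast_pos.2 Fintype.card_pos
  let r (w : (α × β) × γ) : ℝ :=
    ((if g w.2 w.1.2 = w.1.1 then 1 else 0) + (Fintype.card α : ℝ)⁻¹) / 2
  have hr (w) : 0 < r w := by
    have := inv_pos.2 hcard
    simp only [r]
    split_ifs <;> linarith
  have hsum (b z) : ∑ a, r ((a, b), z) ≤ 1 := by
    simp only [r, ← sum_div, sum_add_distrib, sum_ite_eq, mem_univ, if_true, sum_const, card_univ,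
      nsmul_eq_mul, mul_inv_cancel₀ hcard.ne']
    norm_num
  have hlog (w) : -1 - (if g w.2 w.1.2 = w.1.1 then 0 else 1) * logb 2 (Fintype.card α) ≤
      logb 2 (r w) := by
    have hhalf : -1 ≤ logb 2 (2 : ℝ)⁻¹ := by simp
    simp only [r]
    split_ifs
    · rw [zero_mul, sub_zero]
      refine hhalf.trans (logb_le_logb_of_le one_lt_two (by norm_num) ?_)
      have := inv_pos.2 hcard
      linarith
    · rw [zero_add, logb_div (inv_pos.2 hcard).ne' two_ne_zero, logb_inv,
        logb_self_eq_one one_lt_two]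
      linarith
  have hmean := mean_mono (hQ.joint fun w => hK (f w.1)).1 fun w _ => hlog w
  rw [mean_sub _ fun _ => -1, (hQ.joint fun w => hK (f w.1)).mean_const, mean_mul_const,
    mean_joint] at hmean
  have h := condEnt_le_mutualInfo_sub hQ (fun a => hK (f a)) hr hsum
  simp only [errProb]
  linarith

end Codes

section RandomCoding

variable {α β γ ξ : Type*} [Fintype α] [Fintype β] [Fintype γ] [Fintype ξ]

lemma epsilon_error_le [Nonempty α] {ρ : α → ℝ} {T : ℝ} (hρ : ∀ u, 0 ≤ ρ u) (hT : 0 < T) (u : α) :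
    (if Classical.epsilon (fun a => T < ρ a) = u then 0 else 1 : ℝ) ≤
      (if ρ u ≤ T then 1 else 0) + ∑ a ∈ univ.erase u, ρ a / T := by
  have hsum : 0 ≤ ∑ a ∈ univ.erase u, ρ a / T := sum_nonneg fun a _ => div_nonneg (hρ a) hT.le
  by_cases hu : ρ u ≤ T
  · rw [if_pos hu]
    split_ifs <;> linarith
  · rw [if_neg hu, zero_add]
    split_ifs with h
    · exact hsum
    · set a := Classical.epsilon fun a => T < ρ a
      have ha : T < ρ a := Classical.epsilon_spec (p := fun a => T < ρ a) ⟨u, not_le.1 hu⟩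
      calc (1 : ℝ) ≤ ρ a / T := (one_le_div hT).2 ha.le
        _ ≤ _ := single_le_sum (f := fun a => ρ a / T) (fun a _ => div_nonneg (hρ a) hT.le)
            (mem_erase.2 ⟨h, mem_univ a⟩)

/-- Likelihood ratio between a source symbol `u` sent as the input `x` and an independent output,
given the side information `v` and the output `z`. -/
noncomputable def likelihoodRatio (Q : α × β → ℝ) (M : ξ → ℝ) (K : ξ → γ → ℝ) (w : α × β)
    (y : ξ × γ) : ℝ :=
  Q w / pr Q Prod.snd w.2 * (K y.1 y.2 / outLaw M K y.2)

lemma likelihoodRatio_nonneg {Q : α × β → ℝ} {M : ξ → ℝ} {K : ξ → γ → ℝ} (hQ : IsPMF Q)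
    (hM : IsPMF M) (hK : IsKernel K) (w : α × β) (y : ξ × γ) : 0 ≤ likelihoodRatio Q M K w y :=
  mul_nonneg (div_nonneg (hQ.1 _) ((hQ.pr _).1 _)) (div_nonneg ((hK _).1 _) ((hM.outLaw hK).1 _))

lemma sum_eq_pr_snd (Q : α × β → ℝ) (b : β) : ∑ a, Q (a, b) = pr Q Prod.snd b := by
  simp only [pr, Fintype.sum_prod_type, sum_ite_eq', mem_univ, if_true]

lemma sum_mean_likelihoodRatio_le {γ : Type*} (Q : α × β → ℝ) (M : ξ → ℝ) (K : ξ → γ → ℝ)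
    (v : β) (z : γ) :
    ∑ u, mean M (fun x => likelihoodRatio Q M K (u, v) (x, z)) ≤ 1 := by
  simp only [likelihoodRatio, mean_const_mul, div_eq_mul_inv, mean_mul_const, ← sum_mul,
    sum_eq_pr_snd]
  simp only [← div_eq_mul_inv]
  change pr Q Prod.snd v / pr Q Prod.snd v * (outLaw M K z / outLaw M K z) ≤ 1
  have hself (c : ℝ) : 0 ≤ c / c := by
    rcases eq_or_ne c 0 with rfl | hc
    exacts [(div_zero _).ge, (div_self hc).ge.trans' zero_le_one]
  exact mul_le_one₀ (div_self_le_one _) (hself _) (div_self_le_one _)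

lemma mean_wrong_codewords_le {Q : α × β → ℝ} {M : ξ → ℝ} {K : ξ → γ → ℝ} (hQ : IsPMF Q)
    (hM : IsPMF M) (hK : IsKernel K) (w : α × β) :
    mean (piLaw fun _ : α => M) (fun c => mean (K (c w.1)) fun z =>
      ∑ a ∈ univ.erase w.1, likelihoodRatio Q M K (a, w.2) (c a, z)) ≤ 1 := by
  have hLR := likelihoodRatio_nonneg hQ hM hK
  calc mean (piLaw fun _ : α => M) (fun c => mean (K (c w.1)) fun z =>
        ∑ a ∈ univ.erase w.1, likelihoodRatio Q M K (a, w.2) (c a, z))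
      = ∑ a ∈ univ.erase w.1, mean (outLaw M K) fun z =>
          mean M fun x => likelihoodRatio Q M K (a, w.2) (x, z) := by
        simp only [mean_sum]
        refine sum_congr rfl fun a ha => ?_
        rw [mean_piLaw_eval₂ (fun _ => hM) (ne_of_mem_erase ha).symm fun x x' =>
          mean (K x) fun z => likelihoodRatio Q M K (a, w.2) (x', z), mean_outLaw]
        exact mean_congr fun x _ => mean_comm _ _ _
    _ ≤ ∑ a, mean (outLaw M K) fun z =>
          mean M fun x => likelihoodRatio Q M K (a, w.2) (x, z) :=
        sum_le_univ_sum_of_nonneg fun a =>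
          mean_nonneg (hM.outLaw hK).1 fun z => mean_nonneg hM.1 fun x => hLR _ _
    _ ≤ 1 := by
        rw [← mean_sum]
        exact (hM.outLaw hK).mean_le fun z => sum_mean_likelihoodRatio_le Q M K w.2 z

lemma mean_errProb_le {Q : α × β → ℝ} {M : ξ → ℝ} {K : ξ → γ → ℝ} (hQ : IsPMF Q)
    (hM : IsPMF M) (hK : IsKernel K) [Nonempty α] {T : ℝ} (hT : 0 < T) :
    mean (piLaw fun _ : α => M) (fun c => errProb Q K c fun z v =>
      Classical.epsilon fun u => T < likelihoodRatio Q M K (u, v) (c u, z)) ≤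
    mean (prodLaw Q (joint M K)) (fun w => if likelihoodRatio Q M K w.1 w.2 ≤ T then 1 else 0) +
      1 / T := by
  have hc : IsPMF (piLaw fun _ : α => M) := isPMF_piLaw fun _ => hM
  rw [mean_joint, ← hQ.mean_const (1 / T), ← mean_add]
  simp only [errProb]
  rw [mean_comm]
  refine mean_mono hQ.1 fun w _ => ?_
  calc _ ≤ mean (piLaw fun _ : α => M) (fun c => mean (K (c w.1)) fun z =>
        (if likelihoodRatio Q M K w (c w.1, z) ≤ T then 1 else 0) +
          ∑ a ∈ univ.erase w.1, likelihoodRatio Q M K (a, w.2) (c a, z) / T) :=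
        mean_mono hc.1 fun c _ => mean_mono (hK _).1 fun z _ =>
          epsilon_error_le (ρ := fun u => likelihoodRatio Q M K (u, w.2) (c u, z))
            (fun u => likelihoodRatio_nonneg hQ hM hK _ _) hT w.1
    _ = mean (joint M K) (fun y => if likelihoodRatio Q M K w y ≤ T then 1 else 0) +
        mean (piLaw fun _ : α => M) (fun c => mean (K (c w.1)) fun z =>
          ∑ a ∈ univ.erase w.1, likelihoodRatio Q M K (a, w.2) (c a, z)) / T := by
        simp only [mean_add, div_eq_mul_inv, ← sum_mul, mean_mul_const]
        rw [mean_joint, ← mean_piLaw_eval (fun _ => hM) w.1]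
    _ ≤ _ := by
        gcongr
        exact mean_wrong_codewords_le hQ hM hK w

/-- Bound for the error probability of random coding in terms of the moments of the excess of the
information density over the conditional information: a Chebyshev term for the correct codeword,
and a union bound over the wrong ones, for a decoding threshold at half the mean excess. -/
noncomputable def errBound (x : ℝ × ℝ) : ℝ :=
  4 * x.2 / x.1 ^ 2 + 2 ^ (-x.1 / 2)

lemma infoDensity_add_le_of_likelihoodRatio_le {Q : α × β → ℝ} {M : ξ → ℝ} {K : ξ → γ → ℝ}
    (hQ : IsPMF Q) (hM : IsPMF M) (hK : IsKernel K) {w : (α × β) × ξ × γ}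
    (hw : 0 < prodLaw Q (joint M K) w) {t : ℝ} (h : likelihoodRatio Q M K w.1 w.2 ≤ 2 ^ t) :
    condLogLik Q w.1 + infoDensity M K w.2 ≤ t := by
  have hQw : 0 < Q w.1 := (hQ.1 _).lt_of_ne' (left_ne_zero_of_mul hw.ne')
  have hMw : joint M K w.2 ≠ 0 := right_ne_zero_of_mul hw.ne'
  have hKw : 0 < K w.2.1 w.2.2 := ((hK _).1 _).lt_of_ne' (right_ne_zero_of_mul hMw)
  have hpr : 0 < pr Q Prod.snd w.1.2 := pr_snd_pos hQ.1 hQw.ne'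
  have hout : 0 < outLaw M K w.2.2 := outLaw_pos hM hK hMw
  rw [condLogLik, infoDensity, ← logb_div hQw.ne' hpr.ne', ← logb_div hKw.ne' hout.ne',
    ← logb_mul (div_pos hQw hpr).ne' (div_pos hKw hout).ne',
    logb_le_iff_le_rpow one_lt_two (mul_pos (div_pos hQw hpr) (div_pos hKw hout))]
  exact h

lemma exists_decoder_of_pos {Q : α × β → ℝ} {M : ξ → ℝ} {K : ξ → γ → ℝ} (hQ : IsPMF Q)
    (hM : IsPMF M) (hK : IsKernel K) (hpos : 0 < (condMoments Q + infoMoments M K).1) :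
    ∃ g : (α → ξ) → γ → β → α, mean (piLaw fun _ : α => M) (fun c => errProb Q K c (g c)) ≤
      errBound (condMoments Q + infoMoments M K) := by
  have : Nonempty α := hQ.nonempty.map Prod.fst
  set x := condMoments Q + infoMoments M K
  let D (w : (α × β) × ξ × γ) : ℝ := condLogLik Q w.1 + infoDensity M K w.2
  have hD : moments (prodLaw Q (joint M K)) D = x := moments_prodLaw_add hQ (hM.joint hK) _ _
  have hDmean : mean (prodLaw Q (joint M K)) D = x.1 := congrArg Prod.fst hD
  have hDvar : variance (prodLaw Q (joint M K)) D = x.2 := congrArg Prod.snd hD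
  have hP : IsPMF (prodLaw Q (joint M K)) := hQ.joint fun _ => hM.joint hK
  have hT : (0 : ℝ) < 2 ^ (x.1 / 2) := rpow_pos_of_pos two_pos _
  refine ⟨_, (mean_errProb_le hQ hM hK hT).trans ?_⟩
  calc mean (prodLaw Q (joint M K))
          (fun w => if likelihoodRatio Q M K w.1 w.2 ≤ 2 ^ (x.1 / 2) then 1 else 0) +
        1 / 2 ^ (x.1 / 2)
      ≤ mean (prodLaw Q (joint M K))
          (fun w => if D w ≤ mean (prodLaw Q (joint M K)) D - x.1 / 2 then 1 else 0) +
        1 / 2 ^ (x.1 / 2) := by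
        gcongr
        refine mean_mono hP.1 fun w hw => ?_
        rw [hDmean, sub_half]
        split_ifs with h₁ h₂
        exacts [le_rfl, (h₂ (infoDensity_add_le_of_likelihoodRatio_le hQ hM hK hw h₁)).elim,
          zero_le_one, le_rfl]
    _ ≤ x.2 / (x.1 / 2) ^ 2 + 1 / 2 ^ (x.1 / 2) := by
        gcongr
        exact hDvar ▸ mean_lowerTail_le hP.1 (half_pos hpos)
    _ = errBound x := by
        rw [errBound, neg_div, rpow_neg zero_le_two]
        ring

lemma exists_decoder {Q : α × β → ℝ} {M : ξ → ℝ} {K : ξ → γ → ℝ} (hQ : IsPMF Q)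
    (hM : IsPMF M) (hK : IsKernel K) :
    ∃ g : (α → ξ) → γ → β → α, mean (piLaw fun _ : α => M) (fun c => errProb Q K c (g c)) ≤
      errBound (condMoments Q + infoMoments M K) := by
  rcases lt_or_ge 0 (condMoments Q + infoMoments M K).1 with hpos | hneg
  · exact exists_decoder_of_pos hQ hM hK hpos
  · obtain ⟨a, -⟩ := hQ.nonempty
    have hc : IsPMF (piLaw fun _ : α => M) := isPMF_piLaw fun _ => hM
    refine ⟨fun _ _ _ => a, (hc.mean_le fun c => errProb_le_one hQ hK c _).trans ?_⟩
    have hvar : 0 ≤ (condMoments Q + infoMoments M K).2 :=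
      add_nonneg (variance_nonneg hQ.1 _) (variance_nonneg (hM.joint hK).1 _)
    have hpow : (1 : ℝ) ≤ 2 ^ (-(condMoments Q + infoMoments M K).1 / 2) :=
      one_le_rpow one_le_two (by linarith)
    have hcheb : 0 ≤ 4 * (condMoments Q + infoMoments M K).2 /
        (condMoments Q + infoMoments M K).1 ^ 2 := by positivity
    rw [errBound]
    linarith

end RandomCoding

section TwoUsers

variable {α₁ β₁ γ₁ ξ₁ α₂ β₂ γ₂ ξ₂ : Type*} [Fintype α₁] [Fintype β₁] [Fintype γ₁]
  [Fintype α₂] [Fintype β₂] [Fintype γ₂] [Fintype ξ₂]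

lemma mean_errProb_outLaw_pr {Q₁ : α₁ × β₁ → ℝ} {Q₂ : α₂ × β₂ → ℝ} {M₂ : ξ₂ → ℝ}
    (hQ₂ : IsPMF Q₂) (hM₂ : IsPMF M₂) (W : ξ₁ → ξ₂ → γ₁ → ℝ) (f₁ : α₁ → ξ₁)
    (g₁ : γ₁ → β₁ → α₁) :
    mean (piLaw fun _ : α₂ => M₂) (fun f₂ =>
      errProb Q₁ (fun x => outLaw (codewordLaw Q₂ f₂) (W x)) f₁ g₁) =
    errProb Q₁ (fun x => outLaw M₂ (W x)) f₁ g₁ := by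
  simp only [errProb_outLaw, mean_pr]
  rw [mean_comm, ← hQ₂.mean_const (mean M₂ _)]
  exact mean_congr fun w _ =>
    mean_piLaw_eval (fun _ => hM₂) w.1 fun b => errProb Q₁ (fun x => W x b) f₁ g₁

variable [Fintype ξ₁]

lemma exists_codes {Q₁ : α₁ × β₁ → ℝ} {Q₂ : α₂ × β₂ → ℝ} {M₁ : ξ₁ → ℝ} {M₂ : ξ₂ → ℝ}
    {W₁ : ξ₁ → ξ₂ → γ₁ → ℝ} {W₂ : ξ₂ → ξ₁ → γ₂ → ℝ} (hQ₁ : IsPMF Q₁) (hQ₂ : IsPMF Q₂)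
    (hM₁ : IsPMF M₁) (hM₂ : IsPMF M₂) (hW₁ : ∀ x, IsKernel (W₁ x)) (hW₂ : ∀ x, IsKernel (W₂ x)) :
    ∃ (f₁ : α₁ → ξ₁) (f₂ : α₂ → ξ₂) (g₁ : γ₁ → β₁ → α₁) (g₂ : γ₂ → β₂ → α₂),
      errProb Q₁ (fun x => outLaw (codewordLaw Q₂ f₂) (W₁ x)) f₁ g₁ +
        errProb Q₂ (fun x => outLaw (codewordLaw Q₁ f₁) (W₂ x)) f₂ g₂ ≤
      errBound (condMoments Q₁ + infoMoments M₁ fun x => outLaw M₂ (W₁ x)) +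
        errBound (condMoments Q₂ + infoMoments M₂ fun x => outLaw M₁ (W₂ x)) := by
  have hc₁ : IsPMF (piLaw fun _ : α₁ => M₁) := isPMF_piLaw fun _ => hM₁
  have hc₂ : IsPMF (piLaw fun _ : α₂ => M₂) := isPMF_piLaw fun _ => hM₂
  obtain ⟨g₁, hg₁⟩ := exists_decoder hQ₁ hM₁ fun x => hM₂.outLaw (hW₁ x)
  obtain ⟨g₂, hg₂⟩ := exists_decoder hQ₂ hM₂ fun x => hM₁.outLaw (hW₂ x)
  obtain ⟨⟨f₁, f₂⟩, hf⟩ := (hc₁.joint fun _ => hc₂).exists_le_mean fun f =>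
    errProb Q₁ (fun x => outLaw (codewordLaw Q₂ f.2) (W₁ x)) f.1 (g₁ f.1) +
      errProb Q₂ (fun x => outLaw (codewordLaw Q₁ f.1) (W₂ x)) f.2 (g₂ f.2)
  refine ⟨f₁, f₂, g₁ f₁, g₂ f₂, hf.trans ?_⟩
  rw [mean_add, mean_joint, mean_joint, mean_comm (piLaw fun _ : α₁ => M₁) _ fun _ _ =>
    errProb Q₂ _ _ _]
  simp only [mean_errProb_outLaw_pr hQ₂ hM₂, mean_errProb_outLaw_pr hQ₁ hM₁]
  exact add_le_add hg₁ hg₂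

end TwoUsers

section Superadditive

variable {E F : Type*} [AddCommMonoid E] [AddCommMonoid F]

/-- Sets indexed by block lengths, closed under idling and under concatenation of blocks. -/
structure IsSuperadditive (S : ℕ → Set E) : Prop where
  zero_mem (n : ℕ) : 0 ∈ S n
  add_mem {m n : ℕ} {x y : E} : x ∈ S m → y ∈ S n → x + y ∈ S (m + n)

lemma IsSuperadditive.mono {S : ℕ → Set E} (hS : IsSuperadditive S) : Monotone S := by
  intro m n h x hx
  obtain ⟨k, rfl⟩ := Nat.exists_eq_add_of_le h
  simpa only [add_zero] using hS.add_mem hx (hS.zero_mem k)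

lemma IsSuperadditive.nsmul_mem {S : ℕ → Set E} (hS : IsSuperadditive S) {m : ℕ} {x : E}
    (hx : x ∈ S m) (k : ℕ) : k • x ∈ S (k * m) := by
  induction k with
  | zero => simpa only [zero_smul] using hS.zero_mem _
  | succ k ih => simpa only [succ_nsmul, Nat.succ_mul] using hS.add_mem ih hx

lemma IsSuperadditive.image {S : ℕ → Set E} (hS : IsSuperadditive S) (φ : E →+ F) :
    IsSuperadditive fun n => φ '' S n where
  zero_mem n := ⟨0, hS.zero_mem n, map_zero φ⟩
  add_mem := by
    rintro m n _ _ ⟨x, hx, rfl⟩ ⟨y, hy, rfl⟩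
    exact ⟨x + y, hS.add_mem hx hy, map_add φ x y⟩

end Superadditive

section RateRegion

lemma tendsto_floor_mul_div {a : ℝ} (ha : 0 ≤ a) :
    Tendsto (fun N : ℕ => (⌊a * N⌋₊ : ℝ) / N) atTop (nhds a) :=
  (tendsto_nat_floor_mul_div_atTop ha).comp tendsto_natCast_atTop_atTop

variable {E : Type*} [AddCommGroup E] [Module ℝ E]

/-- Normalized points `x / n` with `x ∈ S n`, over all block lengths `n ≥ 1`. -/
def rates (S : ℕ → Set E) : Set E :=
  {r | ∃ n : ℕ, 0 < n ∧ n • r ∈ S n}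

variable [TopologicalSpace E] [ContinuousAdd E] [ContinuousSMul ℝ E]

-- Time sharing: `⌊a N⌋` blocks of `n` copies of the first scheme, then `⌊b N⌋` blocks of `m` copies
-- of the second one.
lemma IsSuperadditive.combo_mem_closure_rates {S : ℕ → Set E} (hS : IsSuperadditive S) {x y : E}
    (hx : x ∈ rates S) (hy : y ∈ rates S) {a b : ℝ} (ha : 0 ≤ a) (hb : 0 ≤ b) (hab : a + b = 1) :
    a • x + b • y ∈ closure (rates S) := by
  obtain ⟨m, hm, hx⟩ := hx
  obtain ⟨n, hn, hy⟩ := hy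
  refine mem_closure_of_tendsto (((tendsto_floor_mul_div ha).smul_const x).add
    ((tendsto_floor_mul_div hb).smul_const y)) ?_
  filter_upwards [eventually_gt_atTop 0] with N hN
  have hNR : (0 : ℝ) < N := Nat.cast_pos.2 hN
  have hlen : ⌊a * N⌋₊ * n * m + ⌊b * N⌋₊ * m * n ≤ N * (m * n) := by
    have hfloor : ⌊a * N⌋₊ + ⌊b * N⌋₊ ≤ N := by
      have h₁ := Nat.floor_le (mul_nonneg ha hNR.le)
      have h₂ := Nat.floor_le (mul_nonneg hb hNR.le)
      have h₃ : a * N + b * N = N := by rw [← add_mul, hab, one_mul]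
      exact_mod_cast (add_le_add h₁ h₂).trans_eq h₃
    calc ⌊a * N⌋₊ * n * m + ⌊b * N⌋₊ * m * n = (⌊a * N⌋₊ + ⌊b * N⌋₊) * (m * n) := by ring
      _ ≤ N * (m * n) := Nat.mul_le_mul_right _ hfloor
  refine ⟨N * (m * n), by positivity, ?_⟩
  convert hS.mono hlen (hS.add_mem (hS.nsmul_mem hx (⌊a * N⌋₊ * n))
    (hS.nsmul_mem hy (⌊b * N⌋₊ * m))) using 1
  simp only [← Nat.cast_smul_eq_nsmul ℝ, smul_add, smul_smul, Nat.cast_mul]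
  congr 2 <;> field_simp

lemma IsSuperadditive.convex_closure_rates {S : ℕ → Set E} (hS : IsSuperadditive S) :
    Convex ℝ (closure (rates S)) := fun x hx y hy a b ha hb hab => by
  rw [← closure_closure]
  exact map_mem_closure₂ (f := fun x y => a • x + b • y) (by fun_prop) hx hy
    fun x hx y hy => hS.combo_mem_closure_rates hx hy ha hb hab

end RateRegion

section Corners

lemma mem_of_convex_of_corners {C : Set (ℝ × ℝ)} (hC : Convex ℝ C) {a b a' b' : ℝ}
    (h0 : (0, 0) ∈ C) (hab : (a, b) ∈ C) (ha' : (a', 0) ∈ C) (hb' : (0, b') ∈ C)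
    (haa' : a ≤ a') (hbb' : b ≤ b') {x y : ℝ} (hx : x ∈ Set.Icc 0 a) (hy : y ∈ Set.Icc 0 b) :
    (x, y) ∈ C := by
  have hfst {x₁ x₂ y x : ℝ} (h₁ : (x₁, y) ∈ C) (h₂ : (x₂, y) ∈ C) (hx : x ∈ Set.Icc x₁ x₂) :
      (x, y) ∈ C := by
    refine hC.segment_subset h₁ h₂ ?_
    rw [← Prod.image_mk_segment_left, segment_eq_Icc (hx.1.trans hx.2)]
    exact ⟨x, hx, rfl⟩
  have hsnd {x y₁ y₂ y : ℝ} (h₁ : (x, y₁) ∈ C) (h₂ : (x, y₂) ∈ C) (hy : y ∈ Set.Icc y₁ y₂) :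
      (x, y) ∈ C := by
    refine hC.segment_subset h₁ h₂ ?_
    rw [← Prod.image_mk_segment_right, segment_eq_Icc (hy.1.trans hy.2)]
    exact ⟨y, hy, rfl⟩
  have hx0 : (x, 0) ∈ C := hfst h0 ha' ⟨hx.1, hx.2.trans haa'⟩
  have h0b : (0, b) ∈ C := hsnd h0 hb' ⟨hy.1.trans hy.2, hbb'⟩
  exact hsnd hx0 (hfst h0b hab hx) hy

lemma exists_mem_gt_of_mem_interior_closure {U : Set (ℝ × ℝ)} {p : ℝ × ℝ}
    (hp : p ∈ interior (closure U)) : ∃ r ∈ U, p.1 < r.1 ∧ p.2 < r.2 := by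
  have hcl : p ∈ closure (Set.Ioi p.1 ×ˢ Set.Ioi p.2) := by
    rw [closure_prod_eq, closure_Ioi, closure_Ioi]
    exact ⟨Set.self_mem_Ici, Set.self_mem_Ici⟩
  obtain ⟨q, hqC, hq⟩ := mem_closure_iff.1 hcl _ isOpen_interior hp
  obtain ⟨r, hr, hrU⟩ := mem_closure_iff.1 (interior_subset hqC) _ (isOpen_Ioi.prod isOpen_Ioi) hq
  exact ⟨r, hrU, hr⟩

end Corners

section Memoryless

variable {α β γ : Type*} [Fintype α] [Fintype β] [Fintype γ] {m n : ℕ}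

/-- Channel that acts on `n` letters by `n` independent uses of `W`. -/
def memoryless (W : α → β → γ → ℝ) (x : Fin n → α) (x' : Fin n → β) : (Fin n → γ) → ℝ :=
  piLaw fun i => W (x i) (x' i)

lemma isKernel_memoryless {α β : Type*} {W : α → β → γ → ℝ} (hW : ∀ a, IsKernel (W a))
    (x : Fin n → α) : IsKernel (memoryless W x) :=
  fun _ => isPMF_piLaw fun _ => hW _ _

/-- Law of the concatenation of two independent blocks. -/
noncomputable def appendLaw (μ : (Fin m → α) → ℝ) (ν : (Fin n → α) → ℝ) :
    (Fin (m + n) → α) → ℝ :=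
  pr (prodLaw μ ν) fun w => Fin.append w.1 w.2

lemma outLaw_appendLaw {α γ : Type*} (W : α → β → γ → ℝ) (μ : (Fin m → β) → ℝ)
    (ν : (Fin n → β) → ℝ) (a : (Fin m → α) × (Fin n → α)) (c : (Fin m → γ) × (Fin n → γ)) :
    outLaw (appendLaw μ ν) (memoryless W (Fin.append a.1 a.2)) (Fin.append c.1 c.2) =
      prodLaw (outLaw μ (memoryless W a.1)) (outLaw ν (memoryless W a.2)) c := by
  simp only [outLaw, appendLaw, mean_pr, mean_joint, joint, memoryless, piLaw, Fin.prod_univ_add,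
    Fin.append_left, Fin.append_right, mean_const_mul, mean_mul_const]

lemma infoMoments_appendLaw {W : α → β → γ → ℝ} (hW : ∀ a, IsKernel (W a))
    {μ : (Fin m → α) → ℝ} {μ' : (Fin n → α) → ℝ} {ν : (Fin m → β) → ℝ} {ν' : (Fin n → β) → ℝ}
    (hμ : IsPMF μ) (hμ' : IsPMF μ') (hν : IsPMF ν) (hν' : IsPMF ν') :
    infoMoments (appendLaw μ μ') (fun a => outLaw (appendLaw ν ν') (memoryless W a)) =
      infoMoments μ (fun a => outLaw ν (memoryless W a)) +
        infoMoments μ' fun a => outLaw ν' (memoryless W a) := by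
  rw [appendLaw, infoMoments_pr, ← infoMoments_comp_equiv _ _ (Fin.appendEquiv m n),
    ← infoMoments_prodLaw hμ hμ' (fun a => hν.outLaw (isKernel_memoryless hW a))
      fun a => hν'.outLaw (isKernel_memoryless hW a)]
  congr 1
  funext a c
  exact outLaw_appendLaw W ν ν' a c

end Memoryless

section MomentRegion

variable {α β γ δ : Type*} [Fintype α] [Fintype β] [Fintype γ] [Fintype δ]

/-- Moments of the two information densities achieved over `n` uses of an interference channel
with independent inputs, where user 1 with input in `α` sees the channel `W₁` and user 2 with input
in `β` sees `W₂`. -/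
def momentRegion (W₁ : α → β → γ → ℝ) (W₂ : β → α → δ → ℝ) (n : ℕ) : Set ((ℝ × ℝ) × (ℝ × ℝ)) :=
  {x | ∃ (μ₁ : (Fin n → α) → ℝ) (μ₂ : (Fin n → β) → ℝ), IsPMF μ₁ ∧ IsPMF μ₂ ∧
    x = (infoMoments μ₁ fun a => outLaw μ₂ (memoryless W₁ a),
      infoMoments μ₂ fun b => outLaw μ₁ (memoryless W₂ b))}

variable {W₁ : α → β → γ → ℝ} {W₂ : β → α → δ → ℝ}

lemma isSuperadditive_momentRegion [Nonempty α] [Nonempty β] (hW₁ : ∀ a, IsKernel (W₁ a))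
    (hW₂ : ∀ b, IsKernel (W₂ b)) : IsSuperadditive (momentRegion W₁ W₂) where
  zero_mem n := by
    obtain ⟨a⟩ : Nonempty (Fin n → α) := inferInstance
    obtain ⟨b⟩ : Nonempty (Fin n → β) := inferInstance
    refine ⟨_, _, isPMF_single a, isPMF_single b, ?_⟩
    rw [infoMoments_single fun x => (isPMF_single b).outLaw (isKernel_memoryless hW₁ x),
      infoMoments_single fun x => (isPMF_single a).outLaw (isKernel_memoryless hW₂ x),
      Prod.mk_zero_zero]
  add_mem := by
    rintro m n _ _ ⟨μ₁, μ₂, hμ₁, hμ₂, rfl⟩ ⟨ν₁, ν₂, hν₁, hν₂, rfl⟩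
    refine ⟨appendLaw μ₁ ν₁, appendLaw μ₂ ν₂, (hμ₁.joint fun _ => hν₁).pr _,
      (hμ₂.joint fun _ => hν₂).pr _, ?_⟩
    rw [infoMoments_appendLaw hW₁ hμ₁ hν₁ hμ₂ hν₂, infoMoments_appendLaw hW₂ hμ₂ hν₂ hμ₁ hν₁,
      Prod.mk_add_mk]

lemma swap_mem_momentRegion {n : ℕ} {x : (ℝ × ℝ) × (ℝ × ℝ)} (hx : x ∈ momentRegion W₁ W₂ n) :
    x.swap ∈ momentRegion W₂ W₁ n := by
  obtain ⟨μ₁, μ₂, hμ₁, hμ₂, rfl⟩ := hx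
  exact ⟨μ₂, μ₁, hμ₂, hμ₁, rfl⟩

lemma nonempty_of_mem_momentRegion {n : ℕ} (hn : 0 < n) {x : (ℝ × ℝ) × (ℝ × ℝ)}
    (hx : x ∈ momentRegion W₁ W₂ n) : Nonempty α ∧ Nonempty β := by
  obtain ⟨μ₁, μ₂, hμ₁, hμ₂, -⟩ := hx
  exact ⟨hμ₁.nonempty.map fun a => a ⟨0, hn⟩, hμ₂.nonempty.map fun b => b ⟨0, hn⟩⟩

lemma exists_mem_momentRegion_snd_eq_zero {n : ℕ} {x : (ℝ × ℝ) × (ℝ × ℝ)}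
    (hW₁ : ∀ a, IsKernel (W₁ a)) (hW₂ : ∀ b, IsKernel (W₂ b)) (hx : x ∈ momentRegion W₁ W₂ n) :
    ∃ y ∈ momentRegion W₁ W₂ n, x.1.1 ≤ y.1.1 ∧ y.2 = 0 := by
  obtain ⟨μ₁, μ₂, hμ₁, hμ₂, rfl⟩ := hx
  obtain ⟨b, hb⟩ := hμ₂.exists_mean_le fun b => mutualInfo μ₁ fun a => memoryless W₁ a b
  refine ⟨_, ⟨μ₁, Pi.single b 1, hμ₁, isPMF_single b, rfl⟩, ?_,
    infoMoments_single (fun x => hμ₁.outLaw (isKernel_memoryless hW₂ x)) b⟩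
  have hsingle (a) : outLaw (Pi.single b 1) (memoryless W₁ a) = memoryless W₁ a b :=
    funext fun _ => mean_single _ _
  simp only [hsingle]
  exact (mutualInfo_outLaw_le hμ₁ hμ₂ (isKernel_memoryless hW₁)).trans hb

end MomentRegion

section InterferenceChannel

variable {α β γ δ : Type*} [Fintype γ] [Fintype δ]

/-- Marginal channel of an interference channel to the first receiver. -/
noncomputable def fstChannel (ch : α × β → γ × δ → ℝ) (a : α) (b : β) : γ → ℝ :=
  pr (ch (a, b)) Prod.fst

/-- Marginal channel of an interference channel to the second receiver; the input of the second user
comes first. -/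
noncomputable def sndChannel (ch : α × β → γ × δ → ℝ) (b : β) (a : α) : δ → ℝ :=
  pr (ch (a, b)) Prod.snd

variable {ch : α × β → γ × δ → ℝ} {n : ℕ}

lemma isKernel_fstChannel (hch : IsKernel ch) (a : α) : IsKernel (fstChannel ch a) :=
  fun _ => (hch _).pr _

lemma isKernel_sndChannel (hch : IsKernel ch) (b : β) : IsKernel (sndChannel ch b) :=
  fun _ => (hch _).pr _

lemma memoryless_fstChannel (a : Fin n → α) (b : Fin n → β) :
    memoryless (fstChannel ch) a b = pr (piLaw fun i => ch (a i, b i)) fun y i => (y i).1 :=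
  (pr_piLaw _ fun _ => Prod.fst).symm

lemma memoryless_sndChannel (a : Fin n → α) (b : Fin n → β) :
    memoryless (sndChannel ch) b a = pr (piLaw fun i => ch (a i, b i)) fun y i => (y i).2 :=
  (pr_piLaw _ fun _ => Prod.snd).symm

end InterferenceChannel

section CapacityRegion

variable {ch : X1 × X2 → Y1 × Y2 → ℝ} {n : ℕ}

lemma mean_jointIC (μ₁ : (Fin n → X1) → ℝ) (μ₂ : (Fin n → X2) → ℝ)
    (F : (Fin n → X1) × (Fin n → X2) × (Fin n → Y1 × Y2) → ℝ) :
    mean (jointIC ch n μ₁ μ₂) F = mean μ₁ fun a => mean μ₂ fun b =>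
      mean (piLaw fun i => ch (a i, b i)) fun y => F (a, b, y) := by
  simp only [mean, jointIC, piLaw, Fintype.sum_prod_type, mul_sum, mul_assoc]

lemma mi_jointIC_fst (hch : IsKernel ch) (μ₁ : (Fin n → X1) → ℝ) {μ₂ : (Fin n → X2) → ℝ}
    (hμ₂ : IsPMF μ₂) :
    mi (jointIC ch n μ₁ μ₂) (fun w => w.1) (fun w i => (w.2.2 i).1) =
      mutualInfo μ₁ fun a => outLaw μ₂ (memoryless (fstChannel ch) a) :=
  mi_eq_mutualInfo (fun a => hμ₂.outLaw (isKernel_memoryless (isKernel_fstChannel hch) a)) <|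
    eq_of_forall_mean_eq fun f => by
      simp only [mean_pr, mean_jointIC, mean_joint, mean_outLaw, memoryless_fstChannel]

lemma mi_jointIC_snd (hch : IsKernel ch) {μ₁ : (Fin n → X1) → ℝ} (hμ₁ : IsPMF μ₁)
    (μ₂ : (Fin n → X2) → ℝ) :
    mi (jointIC ch n μ₁ μ₂) (fun w => w.2.1) (fun w i => (w.2.2 i).2) =
      mutualInfo μ₂ fun b => outLaw μ₁ (memoryless (sndChannel ch) b) :=
  mi_eq_mutualInfo (fun b => hμ₁.outLaw (isKernel_memoryless (isKernel_sndChannel hch) b)) <|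
    eq_of_forall_mean_eq fun f => by
      simp only [mean_pr, mean_jointIC, mean_joint, mean_outLaw, memoryless_sndChannel]
      exact mean_comm _ _ _

/-- Unnormalized pairs of mutual informations achieved over `n` uses of an interference channel. -/
def infoRegion (ch : X1 × X2 → Y1 × Y2 → ℝ) (n : ℕ) : Set (ℝ × ℝ) :=
  (AddMonoidHom.fst ℝ ℝ).prodMap (AddMonoidHom.fst ℝ ℝ) ''
    momentRegion (fstChannel ch) (sndChannel ch) n

lemma mem_En_iff (hch : IsKernel ch) (hn : 0 < n) (r : ℝ × ℝ) :
    r ∈ En ch n ↔ n • r ∈ infoRegion ch n := by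
  have hn0 : (n : ℝ) ≠ 0 := Nat.cast_ne_zero.2 hn.ne'
  have hscale (x : ℝ × ℝ) : r = (1 / (n : ℝ) * x.1, 1 / (n : ℝ) * x.2) ↔ x = n • r := by
    rw [← Nat.cast_smul_eq_nsmul ℝ, ← inv_smul_eq_iff₀ hn0, one_div]
    exact eq_comm
  constructor
  · rintro ⟨μ₁, μ₂, hμ₁, hμ₂, hr⟩
    refine ⟨_, ⟨μ₁, μ₂, hμ₁, hμ₂, rfl⟩, ?_⟩
    rw [mi_jointIC_fst hch μ₁ hμ₂, mi_jointIC_snd hch hμ₁ μ₂] at hr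
    exact (hscale (_, _)).1 hr
  · rintro ⟨_, ⟨μ₁, μ₂, hμ₁, hμ₂, rfl⟩, hr⟩
    refine ⟨μ₁, μ₂, hμ₁, hμ₂, ?_⟩
    rw [mi_jointIC_fst hch μ₁ hμ₂, mi_jointIC_snd hch hμ₁ μ₂]
    exact (hscale (_, _)).2 hr

lemma capIC_eq_closure_rates (hch : IsKernel ch) : capIC ch = closure (rates (infoRegion ch)) := by
  refine congrArg closure (Set.ext fun r => ?_)
  simp only [Set.mem_iUnion, mem_En_iff hch (Nat.succ_pos _)]
  constructor
  · rintro ⟨n, h⟩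
    exact ⟨n + 1, n.succ_pos, h⟩
  · rintro ⟨_ | n, hn, h⟩
    exacts [hn.false.elim, ⟨n, h⟩]

-- Freezing the input of one user at its best value cannot hurt the other user, so the rectangle of
-- rates below an achieved pair has its corners in the convex capacity region.
lemma mem_capIC_of_le (hch : IsKernel ch) (hn : 0 < n) {x : (ℝ × ℝ) × (ℝ × ℝ)}
    (hx : x ∈ momentRegion (fstChannel ch) (sndChannel ch) n) {r : ℝ × ℝ} (h₁ : 0 ≤ r.1)
    (h₂ : 0 ≤ r.2) (hx₁ : n * r.1 ≤ x.1.1) (hx₂ : n * r.2 ≤ x.2.1) : r ∈ capIC ch := by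
  have hW₁ := isKernel_fstChannel hch
  have hW₂ := isKernel_sndChannel hch
  obtain ⟨_, _⟩ := nonempty_of_mem_momentRegion hn hx
  have hS : IsSuperadditive (infoRegion ch) := (isSuperadditive_momentRegion hW₁ hW₂).image _
  have hmem {y : (ℝ × ℝ) × (ℝ × ℝ)} (hy : y ∈ momentRegion (fstChannel ch) (sndChannel ch) n) :
      (y.1.1 / n, y.2.1 / n) ∈ capIC ch := by
    rw [capIC_eq_closure_rates hch]
    refine subset_closure ⟨n, hn, y, hy, ?_⟩
    have hn0 : (n : ℝ) ≠ 0 := Nat.cast_ne_zero.2 hn.ne'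
    ext <;> simp [mul_div_cancel₀ _ hn0]
  obtain ⟨y, hy, hxy, hy0⟩ := exists_mem_momentRegion_snd_eq_zero hW₁ hW₂ hx
  obtain ⟨z, hz, hxz, hz0⟩ := exists_mem_momentRegion_snd_eq_zero hW₂ hW₁ (swap_mem_momentRegion hx)
  have hnR : (0 : ℝ) < n := Nat.cast_pos.2 hn
  have hconvex : Convex ℝ (capIC ch) := capIC_eq_closure_rates hch ▸ hS.convex_closure_rates
  refine mem_of_convex_of_corners hconvex ?_ (hmem hx) ?_ ?_ (div_le_div_of_nonneg_right hxy hnR.le)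
    (div_le_div_of_nonneg_right hxz hnR.le) ⟨h₁, (le_div_iff₀' hnR).2 hx₁⟩
    ⟨h₂, (le_div_iff₀' hnR).2 hx₂⟩
  · simpa using hmem ((isSuperadditive_momentRegion hW₁ hW₂).zero_mem n)
  · simpa [hy0] using hmem hy
  · simpa [hz0] using hmem (swap_mem_momentRegion hz)

end CapacityRegion

section Transmission

variable {X1 X2 : Type} {ch : X1 × X2 → Y1 × Y2 → ℝ} {q1 : U1 × V1 → ℝ} {q2 : U2 × V2 → ℝ} {n : ℕ}
  {f1 : (Fin n → U1) → Fin n → X1} {f2 : (Fin n → U2) → Fin n → X2}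
  {g1 : (Fin n → Y1) → (Fin n → V1) → Fin n → U1} {g2 : (Fin n → Y2) → (Fin n → V2) → Fin n → U2}

/-- Joint law of both users' sources and side informations and of the channel outputs. -/
noncomputable def transmissionLaw (ch : X1 × X2 → Y1 × Y2 → ℝ) (q1 : U1 × V1 → ℝ)
    (q2 : U2 × V2 → ℝ) (f1 : (Fin n → U1) → Fin n → X1) (f2 : (Fin n → U2) → Fin n → X2) :
    (((Fin n → U1) × (Fin n → V1)) × ((Fin n → U2) × (Fin n → V2))) × (Fin n → Y1 × Y2) → ℝ :=
  joint (prodLaw (iid q1 n) (iid q2 n)) fun w => piLaw fun i => ch (f1 w.1.1 i, f2 w.2.1 i)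

lemma transmissionLaw_nonneg (hch : IsKernel ch) (hq1 : IsPMF q1) (hq2 : IsPMF q2) (w) :
    0 ≤ transmissionLaw ch q1 q2 f1 f2 w :=
  ((hq1.iid.joint fun _ => hq2.iid).joint fun _ => isPMF_piLaw fun _ => hch _).1 w

lemma PerrOwn_eq_mean :
    PerrOwn ch q1 q2 n f1 f2 g1 g2 = mean (transmissionLaw ch q1 q2 f1 f2) fun w =>
      if g1 (fun i => (w.2 i).1) w.1.1.2 = w.1.1.1 ∧ g2 (fun i => (w.2 i).2) w.1.2.2 = w.1.2.1
      then 0 else 1 := by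
  simp only [PerrOwn, mean, transmissionLaw, joint, iid, piLaw, Fintype.sum_prod_type]

lemma PerrOwn_nonneg (hch : IsKernel ch) (hq1 : IsPMF q1) (hq2 : IsPMF q2) :
    0 ≤ PerrOwn ch q1 q2 n f1 f2 g1 g2 := by
  rw [PerrOwn_eq_mean]
  exact mean_nonneg (transmissionLaw_nonneg hch hq1 hq2) fun _ => by split_ifs <;> norm_num

/-- Error probability of the first user. -/
noncomputable def fstError (ch : X1 × X2 → Y1 × Y2 → ℝ) (q1 : U1 × V1 → ℝ) (q2 : U2 × V2 → ℝ)
    (f1 : (Fin n → U1) → Fin n → X1) (f2 : (Fin n → U2) → Fin n → X2)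
    (g1 : (Fin n → Y1) → (Fin n → V1) → Fin n → U1) : ℝ :=
  mean (transmissionLaw ch q1 q2 f1 f2) fun w =>
    if g1 (fun i => (w.2 i).1) w.1.1.2 = w.1.1.1 then 0 else 1

/-- Error probability of the second user. -/
noncomputable def sndError (ch : X1 × X2 → Y1 × Y2 → ℝ) (q1 : U1 × V1 → ℝ) (q2 : U2 × V2 → ℝ)
    (f1 : (Fin n → U1) → Fin n → X1) (f2 : (Fin n → U2) → Fin n → X2)
    (g2 : (Fin n → Y2) → (Fin n → V2) → Fin n → U2) : ℝ :=
  mean (transmissionLaw ch q1 q2 f1 f2) fun w =>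
    if g2 (fun i => (w.2 i).2) w.1.2.2 = w.1.2.1 then 0 else 1

lemma fstError_le_PerrOwn (hch : IsKernel ch) (hq1 : IsPMF q1) (hq2 : IsPMF q2) :
    fstError ch q1 q2 f1 f2 g1 ≤ PerrOwn ch q1 q2 n f1 f2 g1 g2 := by
  rw [PerrOwn_eq_mean]
  refine mean_mono (transmissionLaw_nonneg hch hq1 hq2) fun w _ => ?_
  split_ifs <;> first | (norm_num; done) | tauto

lemma sndError_le_PerrOwn (hch : IsKernel ch) (hq1 : IsPMF q1) (hq2 : IsPMF q2) :
    sndError ch q1 q2 f1 f2 g2 ≤ PerrOwn ch q1 q2 n f1 f2 g1 g2 := by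
  rw [PerrOwn_eq_mean]
  refine mean_mono (transmissionLaw_nonneg hch hq1 hq2) fun w _ => ?_
  split_ifs <;> first | (norm_num; done) | tauto

lemma PerrOwn_le_add (hch : IsKernel ch) (hq1 : IsPMF q1) (hq2 : IsPMF q2) :
    PerrOwn ch q1 q2 n f1 f2 g1 g2 ≤
      fstError ch q1 q2 f1 f2 g1 + sndError ch q1 q2 f1 f2 g2 := by
  rw [PerrOwn_eq_mean, fstError, sndError, ← mean_add]
  refine mean_mono (transmissionLaw_nonneg hch hq1 hq2) fun w _ => ?_
  split_ifs <;> first | (norm_num; done) | tauto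

lemma fstError_eq_errProb [Fintype X2] :
    fstError ch q1 q2 f1 f2 g1 = errProb (iid q1 n)
      (fun a => outLaw (codewordLaw (iid q2 n) f2) (memoryless (fstChannel ch) a)) f1 g1 := by
  simp only [fstError, errProb, transmissionLaw, mean_joint, mean_outLaw, mean_pr,
    memoryless_fstChannel]
  congr!

lemma sndError_eq_errProb [Fintype X1] :
    sndError ch q1 q2 f1 f2 g2 = errProb (iid q2 n)
      (fun b => outLaw (codewordLaw (iid q1 n) f1) (memoryless (sndChannel ch) b)) f2 g2 := by
  simp only [sndError, errProb, transmissionLaw, mean_joint, mean_outLaw, mean_pr,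
    memoryless_sndChannel]
  rw [mean_comm]
  congr!

end Transmission

section Converse

lemma mul_condEnt_le {α β γ ξ : Type*} [Fintype α] [Fintype β] [Fintype γ] [Fintype ξ] {n : ℕ}
    {q : α × β → ℝ} {K : (Fin n → ξ) → γ → ℝ} (hq : IsPMF q) (hK : IsKernel K)
    (f : (Fin n → α) → Fin n → ξ) (g : γ → (Fin n → β) → Fin n → α) :
    n * condEnt q Prod.fst Prod.snd ≤ mutualInfo (codewordLaw (iid q n) f) K + 1 +
      errProb (iid q n) K f g * (n * logb 2 (Fintype.card α)) := by
  have hent : condEnt (iid q n) Prod.fst Prod.snd = n * condEnt q Prod.fst Prod.snd := by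
    have h := congrArg Prod.fst (condMoments_iid (n := n) hq)
    simp only [condMoments, moments, Prod.smul_mk, mean_condLogLik, nsmul_eq_mul] at h
    linarith
  have hinfo : mutualInfo (codewordLaw (iid q n) f) K =
      mutualInfo (iid q n) fun w => K (f w.1) :=
    congrArg Prod.fst (infoMoments_pr (iid q n) (fun w => f w.1) K)
  have hcard : logb 2 (Fintype.card (Fin n → α)) = n * logb 2 (Fintype.card α) := by
    rw [Fintype.card_fun, Fintype.card_fin, Nat.cast_pow, logb_pow]
  rw [← hent, hinfo, ← hcard]
  exact fano_inequality hq.iid hK f g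

variable {ch : X1 × X2 → Y1 × Y2 → ℝ} {q1 : U1 × V1 → ℝ} {q2 : U2 × V2 → ℝ}

/-- Lower bound on the rate of information that a code of length `n` with error probability `e`
conveys about a source on `α` with conditional entropy `H`. -/
noncomputable def fanoRate (α : Type*) [Fintype α] (H : ℝ) (n : ℕ) (e : ℝ) : ℝ :=
  max 0 (H - 1 / n - e * logb 2 (Fintype.card α))

lemma mul_fanoRate_le {α : Type*} [Fintype α] {H I e e' : ℝ} {n : ℕ} (hn : 0 < n) (hI : 0 ≤ I)
    (he : e' ≤ e) (h : n * H ≤ I + 1 + e' * (n * logb 2 (Fintype.card α))) :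
    n * fanoRate α H n e ≤ I := by
  have hnR : (0 : ℝ) < n := Nat.cast_pos.2 hn
  have hlog : 0 ≤ logb 2 (Fintype.card α : ℝ) :=
    div_nonneg (log_natCast_nonneg _) (log_nonneg one_le_two)
  rw [fanoRate, ← le_div_iff₀' hnR]
  refine max_le (div_nonneg hI hnR.le) ((le_div_iff₀' hnR).2 ?_)
  have hmul := mul_le_mul_of_nonneg_right he (mul_nonneg hnR.le hlog)
  have hexpand : (n : ℝ) * (H - 1 / n - e * logb 2 (Fintype.card α)) =
      n * H - 1 - e * (n * logb 2 (Fintype.card α)) := by field_simp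
  linarith

lemma tendsto_fanoRate {α : Type*} [Fintype α] {H : ℝ} (hH : 0 ≤ H) {e : ℕ → ℝ}
    (he : Tendsto e atTop (nhds 0)) :
    Tendsto (fun n => fanoRate α H n (e n)) atTop (nhds H) := by
  have h := (tendsto_const_nhds (x := (0 : ℝ))).max
    ((tendsto_one_div_atTop_nhds_zero_nat.const_sub H).sub
      (he.mul_const (logb 2 (Fintype.card α))))
  rwa [sub_zero, zero_mul, sub_zero, max_eq_right hH] at h

lemma fanoRate_mem_capIC (hch : IsKernel ch) (hq1 : IsPMF q1) (hq2 : IsPMF q2) {n : ℕ}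
    (hn : 0 < n) (f1 : (Fin n → U1) → Fin n → X1) (f2 : (Fin n → U2) → Fin n → X2)
    (g1 : (Fin n → Y1) → (Fin n → V1) → Fin n → U1)
    (g2 : (Fin n → Y2) → (Fin n → V2) → Fin n → U2) :
    (fanoRate U1 (condEnt q1 Prod.fst Prod.snd) n (PerrOwn ch q1 q2 n f1 f2 g1 g2),
      fanoRate U2 (condEnt q2 Prod.fst Prod.snd) n (PerrOwn ch q1 q2 n f1 f2 g1 g2)) ∈
      capIC ch := by
  have hμ₁ : IsPMF (codewordLaw (iid q1 n) f1) := hq1.iid.pr _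
  have hμ₂ : IsPMF (codewordLaw (iid q2 n) f2) := hq2.iid.pr _
  have hK₁ (a) := hμ₂.outLaw (isKernel_memoryless (isKernel_fstChannel hch) a)
  have hK₂ (b) := hμ₁.outLaw (isKernel_memoryless (isKernel_sndChannel hch) b)
  refine mem_capIC_of_le hch hn ⟨_, _, hμ₁, hμ₂, rfl⟩ (le_max_left _ _) (le_max_left _ _)
    (mul_fanoRate_le hn (mutualInfo_nonneg hμ₁ hK₁) ?_ (mul_condEnt_le hq1 hK₁ f1 g1))
    (mul_fanoRate_le hn (mutualInfo_nonneg hμ₂ hK₂) ?_ (mul_condEnt_le hq2 hK₂ f2 g2))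
  · exact fstError_eq_errProb.symm.trans_le (fstError_le_PerrOwn hch hq1 hq2)
  · exact sndError_eq_errProb.symm.trans_le (sndError_le_PerrOwn hch hq1 hq2)

theorem ReliableOwn.mem_capIC (h : ReliableOwn ch q1 q2) (hch : IsKernel ch) (hq1 : IsPMF q1)
    (hq2 : IsPMF q2) :
    (condEnt q1 Prod.fst Prod.snd, condEnt q2 Prod.fst Prod.snd) ∈ capIC ch := by
  obtain ⟨f1, f2, g1, g2, he⟩ := h
  have h₁ := tendsto_fanoRate (α := U1) (condEnt_nonneg hq1) he
  have h₂ := tendsto_fanoRate (α := U2) (condEnt_nonneg hq2) he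
  refine isClosed_closure.mem_of_tendsto (h₁.prodMk_nhds h₂) ?_
  filter_upwards [eventually_gt_atTop 0] with n hn
  exact fanoRate_mem_capIC hch hq1 hq2 hn _ _ _ _

end Converse

section Achievability

lemma tendsto_errBound {x : ℕ → ℝ × ℝ} {l : ℝ × ℝ} (hl : 0 < l.1)
    (hx : Tendsto (fun N : ℕ => (N : ℝ)⁻¹ • x N) atTop (nhds l)) :
    Tendsto (fun N => errBound (x N)) atTop (nhds 0) := by
  have hfst : Tendsto (fun N : ℕ => (N : ℝ)⁻¹ * (x N).1) atTop (nhds l.1) := hx.fst_nhds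
  have hsnd : Tendsto (fun N : ℕ => (N : ℝ)⁻¹ * (x N).2) atTop (nhds l.2) := hx.snd_nhds
  have hcheb : Tendsto (fun N => 4 * (x N).2 / (x N).1 ^ 2) atTop (nhds 0) := by
    have h := (((hsnd.const_mul 4).div (hfst.pow 2) (by positivity)).mul
      tendsto_inv_atTop_nhds_zero_nat)
    rw [mul_zero] at h
    refine h.congr' ?_
    filter_upwards [eventually_gt_atTop 0] with N hN
    have hN0 : (N : ℝ) ≠ 0 := Nat.cast_ne_zero.2 hN.ne'
    simp only [Pi.div_apply]
    field_simp
  have hunion : Tendsto (fun N => (2 : ℝ) ^ (-(x N).1 / 2)) atTop (nhds 0) := by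
    have hatTop : Tendsto (fun N => (x N).1) atTop atTop := by
      refine (tendsto_natCast_atTop_atTop.atTop_mul_pos hl hfst).congr' ?_
      filter_upwards [eventually_gt_atTop 0] with N hN
      exact mul_inv_cancel_left₀ (Nat.cast_ne_zero.2 hN.ne') _
    exact (tendsto_rpow_atBot_of_base_gt_one 2 one_lt_two).comp
      ((tendsto_neg_atTop_atBot.comp hatTop).atBot_div_const two_pos)
  simpa only [errBound, add_zero] using hcheb.add hunion

lemma tendsto_errBound_blocks {c x : ℝ × ℝ} {a : ℝ} (ha : 0 ≤ a) (h : 0 < (c + a • x).1) :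
    Tendsto (fun N : ℕ => errBound (N • c + ⌊a * N⌋₊ • x)) atTop (nhds 0) := by
  refine tendsto_errBound h
    (((tendsto_floor_mul_div ha).smul_const x).const_add c |>.congr' ?_)
  filter_upwards [eventually_gt_atTop 0] with N hN
  rw [smul_add, ← Nat.cast_smul_eq_nsmul ℝ, ← Nat.cast_smul_eq_nsmul ℝ, smul_smul, smul_smul,
    inv_mul_cancel₀ (Nat.cast_ne_zero.2 hN.ne'), one_smul, div_eq_inv_mul]

variable {ch : X1 × X2 → Y1 × Y2 → ℝ} {q1 : U1 × V1 → ℝ} {q2 : U2 × V2 → ℝ}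

lemma exists_PerrOwn_le (hch : IsKernel ch) (hq1 : IsPMF q1) (hq2 : IsPMF q2) {N : ℕ}
    {x : (ℝ × ℝ) × (ℝ × ℝ)} (hx : x ∈ momentRegion (fstChannel ch) (sndChannel ch) N) :
    ∃ f1 f2 g1 g2, PerrOwn ch q1 q2 N f1 f2 g1 g2 ≤
      errBound (N • condMoments q1 + x.1) + errBound (N • condMoments q2 + x.2) := by
  obtain ⟨μ₁, μ₂, hμ₁, hμ₂, rfl⟩ := hx
  obtain ⟨f1, f2, g1, g2, h⟩ := exists_codes (hq1.iid (n := N)) (hq2.iid (n := N)) hμ₁ hμ₂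
    (isKernel_memoryless (isKernel_fstChannel hch))
    (isKernel_memoryless (isKernel_sndChannel hch))
  rw [condMoments_iid hq1, condMoments_iid hq2, ← fstError_eq_errProb, ← sndError_eq_errProb] at h
  exact ⟨f1, f2, g1, g2, (PerrOwn_le_add hch hq1 hq2).trans h⟩

theorem reliableOwn_of_lt (hch : IsKernel ch) (hq1 : IsPMF q1) (hq2 : IsPMF q2) {r : ℝ × ℝ}
    (hr : r ∈ rates (infoRegion ch)) (h₁ : condEnt q1 Prod.fst Prod.snd < r.1)
    (h₂ : condEnt q2 Prod.fst Prod.snd < r.2) : ReliableOwn ch q1 q2 := by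
  obtain ⟨n, hn, x, hx, hxr⟩ := hr
  obtain ⟨_, _⟩ := nonempty_of_mem_momentRegion hn hx
  have hS := isSuperadditive_momentRegion (isKernel_fstChannel hch) (isKernel_sndChannel hch)
  have hn0 : (n : ℝ) ≠ 0 := Nat.cast_ne_zero.2 hn.ne'
  have hblocks (N : ℕ) : ⌊(n : ℝ)⁻¹ * N⌋₊ • x ∈ momentRegion (fstChannel ch) (sndChannel ch) N := by
    refine hS.mono ?_ (hS.nsmul_mem hx _)
    rw [← div_eq_inv_mul, Nat.floor_div_eq_div]
    exact Nat.div_mul_le_self N n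
  choose f1 f2 g1 g2 hcode using fun N => exists_PerrOwn_le hch hq1 hq2 (hblocks N)
  refine ⟨f1, f2, g1, g2, squeeze_zero (fun N => PerrOwn_nonneg hch hq1 hq2) hcode ?_⟩
  have hx₁ : (n : ℝ)⁻¹ * x.1.1 = r.1 := by
    rw [inv_mul_eq_iff_eq_mul₀ hn0]
    simpa using congrArg Prod.fst hxr
  have hx₂ : (n : ℝ)⁻¹ * x.2.1 = r.2 := by
    rw [inv_mul_eq_iff_eq_mul₀ hn0]
    simpa using congrArg Prod.snd hxr
  have hpos₁ : 0 < (condMoments q1 + (n : ℝ)⁻¹ • x.1).1 := by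
    change 0 < mean q1 (condLogLik q1) + (n : ℝ)⁻¹ * x.1.1
    rw [mean_condLogLik, hx₁]
    linarith
  have hpos₂ : 0 < (condMoments q2 + (n : ℝ)⁻¹ • x.2).1 := by
    change 0 < mean q2 (condLogLik q2) + (n : ℝ)⁻¹ * x.2.1
    rw [mean_condLogLik, hx₂]
    linarith
  simpa only [add_zero, Prod.smul_fst, Prod.smul_snd] using
    (tendsto_errBound_blocks (inv_nonneg.2 n.cast_nonneg) hpos₁).add
      (tendsto_errBound_blocks (inv_nonneg.2 n.cast_nonneg) hpos₂)

end Achievability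

theorem stmt0 (ch : X1 × X2 → Y1 × Y2 → ℝ) (q1 : U1 × V1 → ℝ) (q2 : U2 × V2 → ℝ)
    (hch : IsKernel ch) (hq1 : IsPMF q1) (hq2 : IsPMF q2) :
    (((condEnt q1 Prod.fst Prod.snd, condEnt q2 Prod.fst Prod.snd) : ℝ × ℝ) ∈
        interior (capIC ch) → ReliableOwn ch q1 q2) ∧
    (((condEnt q1 Prod.fst Prod.snd, condEnt q2 Prod.fst Prod.snd) : ℝ × ℝ) ∉ capIC ch →
        ¬ ReliableOwn ch q1 q2) := by
  refine ⟨fun hH => ?_, fun hH hrel => hH (hrel.mem_capIC hch hq1 hq2)⟩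
  rw [capIC_eq_closure_rates hch] at hH
  obtain ⟨r, hr, h₁, h₂⟩ := exists_mem_gt_of_mem_interior_closure hH
  exact reliableOwn_of_lt hch hq1 hq2 hr h₁ h₂

end Stmt0

end Paper
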